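/- arXiv:2506.10725 — 5 statements merged into one kernel-verified Lean document; each statement's English description precedes it below -/
import Mathlib

section
/- Let ρ1 be a state on H_A ⊗ H_B, ρ2 a state on H_{B'} ⊗ H_C, and B_b any matrix on H_B ⊗ H_{B'}. Define the map B'_{B_b}(τ) = tr_B(B_b (τ ⊗ 1_{B'})) from operators on H_B to operators on H_{B'}, the map S_{ρ2}(ω) = tr_{B'}(ρ2 (ω ⊗ 1_C)) from operators on H_{B'} to operators on H_C, and the building block E_{B_b,ρ2} = S_{ρ2} ∘ B'_{B_b}. Then, after reordering tensor factors appropriately, the partial trace over H_B ⊗ H_{B'} of (1_A ⊗ B_b ⊗ 1_C)(ρ1 ⊗ ρ2) equals (id_A ⊗ E_{B_b,ρ2})(ρ1), where id_A ⊗ E_{B_b,ρ2} is the unique linear map on operators of H_A ⊗ H_B acting as X ⊗ Y ↦ X ⊗ E_{B_b,ρ2}(Y) on product operators. -/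
/-!
Both sides are linear in `ρ1`, and matrix units `E_{ij} ⊗ E_{kl}` span the operators on
`H_A ⊗ H_B`, so it suffices to compare them on product operators `X ⊗ Y`. There the two sides
have the same entries: at `((a, c), (a', c'))` both equal
`X a a' * ∑ b b' d d', Bb (b, b') (d, d') * Y d b * ρ2 (d', c) (b', c')`.
-/

open scoped Kronecker ComplexOrder

noncomputable section

/-- A quantum state: positive semidefinite matrix with unit trace. -/
def IsState {n : Type*} [Fintype n] (ρ : Matrix n n ℂ) : Prop :=
  ρ.PosSemidef ∧ ρ.trace = 1

/-- Partial trace over the second tensor factor. -/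
def ptraceSnd {A B : Type*} [Fintype B] (X : Matrix (A × B) (A × B) ℂ) : Matrix A A ℂ :=
  Matrix.of fun a a' => ∑ b, X (a, b) (a', b)

/-- Partial trace over the first tensor factor. -/
def ptraceFst {A B : Type*} [Fintype A] (X : Matrix (A × B) (A × B) ℂ) : Matrix B B ℂ :=
  Matrix.of fun b b' => ∑ a, X (a, b) (a, b')

/-- The map `B'_{B_b}(τ) = tr_B (B_b (τ ⊗ 1_{B'}))` from operators on `H_B` to operators
on `H_{B'}` induced by a measurement operator `B_b` on `H_B ⊗ H_{B'}`. -/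
def measOp {B B' : Type*} [Fintype B] [Fintype B'] [DecidableEq B']
    (Bb : Matrix (B × B') (B × B') ℂ) (τ : Matrix B B ℂ) : Matrix B' B' ℂ :=
  ptraceFst (Bb * (τ ⊗ₖ (1 : Matrix B' B' ℂ)))

/-- The map `S_{ρ2}(ω) = tr_{B'} (ρ2 (ω ⊗ 1_C))` from operators on `H_{B'}` to operators
on `H_C` induced by a state `ρ2` on `H_{B'} ⊗ H_C`. -/
def stateOp {B' C : Type*} [Fintype B'] [Fintype C] [DecidableEq C]
    (ρ2 : Matrix (B' × C) (B' × C) ℂ) (ω : Matrix B' B' ℂ) : Matrix C C ℂ :=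
  ptraceFst (ρ2 * (ω ⊗ₖ (1 : Matrix C C ℂ)))

/-- The building block `E_{B_b,ρ2} = S_{ρ2} ∘ B'_{B_b}`. -/
def buildingBlock {B B' C : Type*} [Fintype B] [Fintype B'] [Fintype C]
    [DecidableEq B'] [DecidableEq C]
    (Bb : Matrix (B × B') (B × B') ℂ) (ρ2 : Matrix (B' × C) (B' × C) ℂ)
    (τ : Matrix B B ℂ) : Matrix C C ℂ :=
  stateOp ρ2 (measOp Bb τ)

/-- Reordering `(A ⊗ C) ⊗ (B ⊗ B') → A ⊗ (B ⊗ B') ⊗ C`. -/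
def reorderMeas {A B B' C : Type*} : (A × C) × (B × B') → (A × (B × B')) × C :=
  fun x => ((x.1.1, x.2), x.1.2)

/-- Reordering `(A ⊗ C) ⊗ (B ⊗ B') → (A ⊗ B) ⊗ (B' ⊗ C)`. -/
def reorderState {A B B' C : Type*} : (A × C) × (B × B') → (A × B) × (B' × C) :=
  fun x => ((x.1.1, x.2.1), (x.2.2, x.1.2))

/-- The global operator `(1_A ⊗ B_b ⊗ 1_C)(ρ1 ⊗ ρ2)`, with all tensor factors reordered so
that it acts on `(H_A ⊗ H_C) ⊗ (H_B ⊗ H_{B'})`. -/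
def bilocGlobal {A B B' C : Type*} [Fintype A] [Fintype B] [Fintype B'] [Fintype C]
    [DecidableEq A] [DecidableEq C]
    (ρ1 : Matrix (A × B) (A × B) ℂ) (ρ2 : Matrix (B' × C) (B' × C) ℂ)
    (Bb : Matrix (B × B') (B × B') ℂ) :
    Matrix ((A × C) × (B × B')) ((A × C) × (B × B')) ℂ :=
  ((((1 : Matrix A A ℂ) ⊗ₖ Bb) ⊗ₖ (1 : Matrix C C ℂ)).submatrix reorderMeas reorderMeas) *
    ((ρ1 ⊗ₖ ρ2).submatrix reorderState reorderState)

/-- Entries of the partial trace of the global operator; the identities on `H_A` and `H_C`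
have collapsed two of the summations. -/
lemma ptraceSnd_bilocGlobal_apply {A B B' C : Type*} [Fintype A] [Fintype B] [Fintype B']
    [Fintype C] [DecidableEq A] [DecidableEq C]
    (ρ1 : Matrix (A × B) (A × B) ℂ) (ρ2 : Matrix (B' × C) (B' × C) ℂ)
    (Bb : Matrix (B × B') (B × B') ℂ) (a a' : A) (c c' : C) :
    ptraceSnd (bilocGlobal ρ1 ρ2 Bb) (a, c) (a', c') =
      ∑ b, ∑ b', ∑ d, ∑ d',
        Bb (b, b') (d, d') * (ρ1 (a, d) (a', b) * ρ2 (d', c) (b', c')) := by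
  simp [ptraceSnd, bilocGlobal, Matrix.mul_apply, Fintype.sum_prod_type, reorderMeas,
    reorderState, Matrix.one_apply, Finset.sum_ite_eq, ite_mul, mul_ite]

lemma buildingBlock_apply {B B' C : Type*} [Fintype B] [Fintype B'] [Fintype C]
    [DecidableEq B'] [DecidableEq C]
    (Bb : Matrix (B × B') (B × B') ℂ) (ρ2 : Matrix (B' × C) (B' × C) ℂ)
    (Y : Matrix B B ℂ) (c c' : C) :
    buildingBlock Bb ρ2 Y c c' =
      ∑ d', ∑ b', ρ2 (d', c) (b', c') * ∑ b, ∑ d, Bb (b, b') (d, d') * Y d b := by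
  simp [buildingBlock, stateOp, measOp, ptraceFst, Matrix.mul_apply, Fintype.sum_prod_type,
    Matrix.one_apply]

/-- `endpointMap` below agrees with `id_A ⊗ E_{B_b,ρ2}` on product operators. -/
lemma ptraceSnd_bilocGlobal_kronecker {A B B' C : Type*} [Fintype A] [Fintype B] [Fintype B']
    [Fintype C] [DecidableEq A] [DecidableEq B'] [DecidableEq C]
    (X : Matrix A A ℂ) (Y : Matrix B B ℂ) (ρ2 : Matrix (B' × C) (B' × C) ℂ)
    (Bb : Matrix (B × B') (B × B') ℂ) :
    ptraceSnd (bilocGlobal (X ⊗ₖ Y) ρ2 Bb) = X ⊗ₖ buildingBlock Bb ρ2 Y := by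
  ext ⟨a, c⟩ ⟨a', c'⟩
  rw [ptraceSnd_bilocGlobal_apply, Matrix.kroneckerMap_apply, buildingBlock_apply]
  simp only [Matrix.kroneckerMap_apply, Finset.mul_sum]
  -- Bring the summations on the left into the order `d', b', b, d` used on the right.
  rw [Finset.sum_comm]
  simp_rw [Finset.sum_comm (s := (Finset.univ : Finset B)) (t := (Finset.univ : Finset B'))]
  rw [Finset.sum_comm]
  refine Finset.sum_congr rfl fun d' _ => Finset.sum_congr rfl fun b' _ =>
    Finset.sum_congr rfl fun b _ => Finset.sum_congr rfl fun d _ => ?_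
  ring

/-- The left-hand side of the identity as a linear map in `ρ1`. -/
def endpointMap {A B B' C : Type*} [Fintype A] [Fintype B] [Fintype B'] [Fintype C]
    [DecidableEq A] [DecidableEq C]
    (ρ2 : Matrix (B' × C) (B' × C) ℂ) (Bb : Matrix (B × B') (B × B') ℂ) :
    Matrix (A × B) (A × B) ℂ →ₗ[ℂ] Matrix (A × C) (A × C) ℂ where
  toFun ρ1 := ptraceSnd (bilocGlobal ρ1 ρ2 Bb)
  map_add' ρ σ := by
    ext ⟨a, c⟩ ⟨a', c'⟩
    simp only [Matrix.add_apply, ptraceSnd_bilocGlobal_apply, add_mul, mul_add,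
      Finset.sum_add_distrib]
  map_smul' r ρ := by
    ext ⟨a, c⟩ ⟨a', c'⟩
    simp only [Matrix.smul_apply, ptraceSnd_bilocGlobal_apply, smul_eq_mul, RingHom.id_apply,
      Finset.mul_sum, mul_assoc, mul_left_comm r]

/-- The bilocality endpoint ensemble equals `(id_A ⊗ E_{B_b,ρ2})(ρ1)`,
where `id_A ⊗ E_{B_b,ρ2}` is the unique linear map acting on product operators as
`X ⊗ Y ↦ X ⊗ E_{B_b,ρ2}(Y)`. -/
theorem statement1 {A B B' C : Type*} [Fintype A] [Fintype B] [Fintype B'] [Fintype C]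
    [DecidableEq A] [DecidableEq B'] [DecidableEq C]
    (ρ1 : Matrix (A × B) (A × B) ℂ) (ρ2 : Matrix (B' × C) (B' × C) ℂ)
    (hρ1 : IsState ρ1) (hρ2 : IsState ρ2)
    (Bb : Matrix (B × B') (B × B') ℂ)
    (T : Matrix (A × B) (A × B) ℂ →ₗ[ℂ] Matrix (A × C) (A × C) ℂ)
    (hT : ∀ (X : Matrix A A ℂ) (Y : Matrix B B ℂ),
      T (X ⊗ₖ Y) = X ⊗ₖ buildingBlock Bb ρ2 Y) :
    ptraceSnd (bilocGlobal ρ1 ρ2 Bb) = T ρ1 := by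
  classical
  suffices h : endpointMap ρ2 Bb = T from LinearMap.congr_fun h ρ1
  refine Matrix.ext_linearMap ℂ fun p q => LinearMap.ext_ring ?_
  -- A matrix unit on `H_A ⊗ H_B` is a product of matrix units.
  have hunit : Matrix.single p q (1 : ℂ) =
      Matrix.single p.1 q.1 (1 : ℂ) ⊗ₖ Matrix.single p.2 q.2 (1 : ℂ) := by
    simp [Matrix.single_kronecker_single]
  change ptraceSnd (bilocGlobal (Matrix.single p q (1 : ℂ)) ρ2 Bb) = T (Matrix.single p q 1)
  rw [hunit, hT, ptraceSnd_bilocGlobal_kronecker]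
end
end

section
/- Let F and N be convex sets of states on a space H, and F' and N' convex sets of states on a space H'. Let Φ be a linear map from operators on H to operators on H' such that Φ(cone F) ⊆ cone F' and Φ(cone N) ⊆ cone N'. Suppose a state ρ on H satisfies ρ = (1+r)τ − rη with r ≥ 0, τ ∈ F, η ∈ N, and suppose tr Φ(ρ) > 0 and tr Φ(η) = tr Φ(ρ). Then the robustness of the normalized output satisfies R_{F'}^{N'}(Φ(ρ)/tr Φ(ρ)) ≤ r. -/
/-!
Write `Φ τ = a • τ'` and `Φ η = b • η'` with `τ' ∈ F'`, `η' ∈ N'`. Taking traces, `b = tr Φ(η) = c`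
and `(1 + r) a - r b = tr Φ(ρ) = c`, so `a = c` as well. Dividing `Φ ρ = (1 + r) Φ τ - r Φ η` by `c`
shows that `r` is itself feasible in the infimum defining the robustness of the normalized output.
-/

open scoped ComplexOrder

noncomputable section

/-- The cone generated by a set of matrices: nonnegative multiples of its members. -/
def cone {n : Type*} (S : Set (Matrix n n ℂ)) : Set (Matrix n n ℂ) :=
  { X | ∃ (c : ℝ) (σ : Matrix n n ℂ), 0 ≤ c ∧ σ ∈ S ∧ X = c • σ }

/-- The robustness of `σ` with respect to a free set `F` and a noise set `N`:
`R_F^N(σ) = inf { r ≥ 0 : ∃ τ ∈ F, η ∈ N, σ = (1+r)τ − rη }`. -/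
def robustness {n : Type*} (F N : Set (Matrix n n ℂ)) (σ : Matrix n n ℂ) : ℝ :=
  sInf { r : ℝ | 0 ≤ r ∧ ∃ τ ∈ F, ∃ η ∈ N, σ = (1 + r) • τ - r • η }

/-- If `Φ` maps the cones of the free and noise sets into the corresponding
cones, `ρ = (1+r)τ − rη` with `τ ∈ F`, `η ∈ N`, `tr Φ(ρ) = c > 0`, and `tr Φ(η) = tr Φ(ρ)`,
then the robustness of the normalized output is at most `r`. -/
theorem statement3 {H H' : Type*} [Fintype H] [Fintype H']
    (F N : Set (Matrix H H ℂ)) (F' N' : Set (Matrix H' H' ℂ))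
    (hFs : ∀ σ ∈ F, IsState σ) (hNs : ∀ σ ∈ N, IsState σ)
    (hF's : ∀ σ ∈ F', IsState σ) (hN's : ∀ σ ∈ N', IsState σ)
    (hFconv : Convex ℝ F) (hNconv : Convex ℝ N)
    (hF'conv : Convex ℝ F') (hN'conv : Convex ℝ N')
    (Φ : Matrix H H ℂ →ₗ[ℂ] Matrix H' H' ℂ)
    (hΦF : Φ '' cone F ⊆ cone F') (hΦN : Φ '' cone N ⊆ cone N')
    (ρ : Matrix H H ℂ) (hρ : IsState ρ)
    (r : ℝ) (hr : 0 ≤ r) (τ : Matrix H H ℂ) (hτ : τ ∈ F) (η : Matrix H H ℂ) (hη : η ∈ N)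
    (hdec : ρ = (1 + r) • τ - r • η)
    (c : ℝ) (hc : 0 < c) (htr : (Φ ρ).trace = (c : ℂ))
    (hηtr : (Φ η).trace = (Φ ρ).trace) :
    robustness F' N' (c⁻¹ • Φ ρ) ≤ r := by
  obtain ⟨a, τ', -, hτ', ha⟩ := hΦF ⟨τ, ⟨1, τ, zero_le_one, hτ, (one_smul ℝ τ).symm⟩, rfl⟩
  obtain ⟨b, η', -, hη', hb⟩ := hΦN ⟨η, ⟨1, η, zero_le_one, hη, (one_smul ℝ η).symm⟩, rfl⟩
  have hΦρ : Φ ρ = (1 + r) • (a • τ') - r • (b • η') := by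
    rw [hdec, map_sub, LinearMap.map_smul_of_tower, LinearMap.map_smul_of_tower, ha, hb]
  -- Elements of `F'` and `N'` have unit trace, so the scalars are determined by traces.
  have hbc : b = c := by
    rw [htr, hb, Matrix.trace_smul, (hN's η' hη').2, Complex.real_smul, mul_one] at hηtr
    exact_mod_cast hηtr
  have hac : a = c := by
    rw [hΦρ, Matrix.trace_sub, Matrix.trace_smul, Matrix.trace_smul, Matrix.trace_smul,
      Matrix.trace_smul, (hF's τ' hτ').2, (hN's η' hη').2] at htr
    simp only [Complex.real_smul, mul_one] at htr
    have h : (1 + r) * a - r * b = c := by exact_mod_cast htr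
    rw [hbc] at h
    have h0 : (1 + r) * (a - c) = 0 := by linear_combination h
    have h1 : (1 + r) ≠ 0 := by positivity
    linarith [(mul_eq_zero.mp h0).resolve_left h1]
  refine csInf_le ⟨0, fun x hx => hx.1⟩ ⟨hr, τ', hτ', η', hη', ?_⟩
  rw [hΦρ, hac, hbc, smul_sub, smul_comm c⁻¹ (1 + r), smul_comm c⁻¹ r,
    inv_smul_smul₀ hc.ne', inv_smul_smul₀ hc.ne']
end
end

section
/- (Robustness of an individual measurement in a line network.) Let M = {M_i} be a POVM on H_B ⊗ H_{B'} with separable-robustness R_SEP^N(M) where the noise set N is either all POVMs or all separable POVMs, and correspondingly let N' be either all states or all separable states (on the endpoint space). Let ω0 be a state on H_{A_0} ⊗ H_B and ξ0 a state on H_{B'} ⊗ H_{C_0}, and set π_i = (S*_{ω0} ⊗ S*_{ξ0})(M_i), where S*_{ω0}(X) = tr_B(ω0 (1 ⊗ X)) and S*_{ξ0}(Y) = tr_{B'}(ξ0 (Y ⊗ 1)). Let {A_b}, {Ã_c} be finite families of completely positive maps (from operators on H_{A_0}, resp. H_{C_0}, to operators on the endpoint spaces) such that each A_b ⊗ Ã_c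 maps the cone of separable states into the cone of separable states, each A_b ⊗ Ã_c maps cone(N'-states induced from N) into cone(N'), and Σ_{b,c} tr((A_b ⊗ Ã_c)(X)) = tr X for all X. Set σ_{i,b,c} = (A_b ⊗ Ã_c)(π_i). Then Σ_{(i,b,c) : tr σ_{i,b,c} > 0} tr(σ_{i,b,c}) · R_SEP^{N'}(σ_{i,b,c}/tr σ_{i,b,c}) ≤ R_SEP^N(M). -/
/-! Every decomposition `M i = (1 + r) P i - r N i` of the POVM is pushed forward through
`T b c ∘ S`. Steering preserves positivity and separability (`steer_posSemidef`,
`steer_sep_mem_cone`), so the outcome `σ = T b c (S (M i))` becomes `(1 + r) τ - r η` with `τ` in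
the separable cone and `η` in the noise cone. Normalising the traces shows that
`tr σ * R(σ / tr σ) ≤ r * tr η` (`trace_mul_robustness_le`), and the traces of the
noise terms add up to `tr (S 1) = tr ω0 * tr ξ0 = 1`. Hence the left-hand side is at most `r`.

Since the infimum of an empty set of reals is `0`, it must also be shown that some `r` is feasible.
This holds because `M i + c • 1` lies in the separable cone for large `c`
(`exists_add_smul_one_mem_sepCone`), so the uniform POVM can serve as noise.
-/


open scoped Kronecker ComplexOrder

noncomputable section

/-- A POVM: a finite family of positive semidefinite matrices summing to the identity. -/
def IsPOVM {d ι : Type*} [Fintype d] [Fintype ι] [DecidableEq d]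
    (M : ι → Matrix d d ℂ) : Prop :=
  (∀ i, (M i).PosSemidef) ∧ (∑ i, M i) = 1

/-- A separable bipartite state: a finite convex combination of product states. -/
def IsSepState {A B : Type*} [Fintype A] [Fintype B]
    (σ : Matrix (A × B) (A × B) ℂ) : Prop :=
  ∃ (m : ℕ) (p : Fin m → ℝ) (α : Fin m → Matrix A A ℂ) (β : Fin m → Matrix B B ℂ),
    (∀ l, 0 ≤ p l) ∧ (∑ l, p l = 1) ∧ (∀ l, IsState (α l)) ∧ (∀ l, IsState (β l)) ∧
    σ = ∑ l, p l • (α l ⊗ₖ β l)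

/-- A separable POVM: each element is a sum of products of positive semidefinite operators. -/
def IsSepPOVM {A B ι : Type*} [Fintype A] [Fintype B] [Fintype ι]
    [DecidableEq A] [DecidableEq B]
    (M : ι → Matrix (A × B) (A × B) ℂ) : Prop :=
  IsPOVM M ∧ ∀ i, ∃ (m : ℕ) (P : Fin m → Matrix A A ℂ) (Q : Fin m → Matrix B B ℂ),
    (∀ a, (P a).PosSemidef) ∧ (∀ a, (Q a).PosSemidef) ∧ M i = ∑ a, P a ⊗ₖ Q a

/-- The robustness of a POVM `M` with respect to a free set and a noise set of POVMs. -/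
def povmRobustness {d ι : Type*} [Fintype d] [Fintype ι] [DecidableEq d]
    (Free Noise : Set (ι → Matrix d d ℂ)) (M : ι → Matrix d d ℂ) : ℝ :=
  sInf { r : ℝ | 0 ≤ r ∧ ∃ P ∈ Free, ∃ Nn ∈ Noise,
    ∀ i, M i = (1 + r) • P i - r • Nn i }

/-- A completely positive map in terms of a Kraus representation. -/
def IsCPMap {m n : Type*} [Fintype m] [Fintype n]
    (Φ : Matrix m m ℂ →ₗ[ℂ] Matrix n n ℂ) : Prop :=
  ∃ (r : ℕ) (K : Fin r → Matrix n m ℂ), ∀ X, Φ X = ∑ k, K k * X * (K k).conjTranspose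

/-- The steering operation `S*_{ω0}(X) = tr_B (ω0 (1 ⊗ X))` of a state on `H_{A_0} ⊗ H_B`. -/
def steerA {A B : Type*} [Fintype A] [Fintype B] [DecidableEq A]
    (ρ : Matrix (A × B) (A × B) ℂ) (X : Matrix B B ℂ) : Matrix A A ℂ :=
  ptraceSnd (ρ * ((1 : Matrix A A ℂ) ⊗ₖ X))

/-- The steering operation `S*_{ξ0}(Y) = tr_{B'} (ξ0 (Y ⊗ 1))` of a state on `H_{B'} ⊗ H_{C_0}`. -/
def steerC {B' C : Type*} [Fintype B'] [Fintype C] [DecidableEq C]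
    (ρ : Matrix (B' × C) (B' × C) ℂ) (Y : Matrix B' B' ℂ) : Matrix C C ℂ :=
  ptraceFst (ρ * (Y ⊗ₖ (1 : Matrix C C ℂ)))

section Helpers

open Matrix

/-! ### The cone of separable operators -/

/-- The cone of separable operators, as the additive monoid generated by products of positive
semidefinite matrices (nonnegative scalars can be absorbed into a factor). -/
def sepCone (A B : Type*) [Fintype A] [Fintype B] : AddSubmonoid (Matrix (A × B) (A × B) ℂ) :=
  AddSubmonoid.closure { X | ∃ (P : Matrix A A ℂ) (Q : Matrix B B ℂ),
    P.PosSemidef ∧ Q.PosSemidef ∧ X = P ⊗ₖ Q }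

section SepCone

variable {A B : Type*} [Fintype A] [Fintype B]

lemma kronecker_mem_sepCone {P : Matrix A A ℂ} {Q : Matrix B B ℂ} (hP : P.PosSemidef)
    (hQ : Q.PosSemidef) : P ⊗ₖ Q ∈ sepCone A B :=
  AddSubmonoid.subset_closure ⟨P, Q, hP, hQ, rfl⟩

lemma exists_sum_of_mem_sepCone {X : Matrix (A × B) (A × B) ℂ} (hX : X ∈ sepCone A B) :
    ∃ (m : ℕ) (P : Fin m → Matrix A A ℂ) (Q : Fin m → Matrix B B ℂ),
      (∀ a, (P a).PosSemidef) ∧ (∀ a, (Q a).PosSemidef) ∧ X = ∑ a, P a ⊗ₖ Q a := by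
  induction hX using AddSubmonoid.closure_induction with
  | mem X hX =>
    obtain ⟨P, Q, hP, hQ, rfl⟩ := hX
    exact ⟨1, fun _ => P, fun _ => Q, fun _ => hP, fun _ => hQ, by simp⟩
  | zero => exact ⟨0, fun _ => 0, fun _ => 0, fun _ => .zero, fun _ => .zero, by simp⟩
  | add X Y _ _ hX hY =>
    obtain ⟨m, P, Q, hP, hQ, rfl⟩ := hX
    obtain ⟨n, P', Q', hP', hQ', rfl⟩ := hY
    refine ⟨m + n, Fin.append P P', Fin.append Q Q', ?_, ?_, ?_⟩
    · intro a
      refine Fin.addCases (fun i => ?_) (fun i => ?_) a <;> simp [hP, hP']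
    · intro a
      refine Fin.addCases (fun i => ?_) (fun i => ?_) a <;> simp [hQ, hQ']
    · simp [Fin.sum_univ_add]

lemma posSemidef_of_mem_sepCone {X : Matrix (A × B) (A × B) ℂ} (hX : X ∈ sepCone A B) :
    X.PosSemidef := by
  induction hX using AddSubmonoid.closure_induction with
  | mem X hX =>
    obtain ⟨P, Q, hP, hQ, rfl⟩ := hX
    exact hP.kronecker hQ
  | zero => exact .zero
  | add X Y _ _ hX hY => exact hX.add hY

lemma posSemidef_real_smul {n : Type*} [Fintype n] {P : Matrix n n ℂ} (hP : P.PosSemidef)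
    {c : ℝ} (hc : 0 ≤ c) : (c • P).PosSemidef := by
  have h := hP.smul (a := (c : ℂ)) (by exact_mod_cast hc)
  rwa [show c • P = (c : ℂ) • P by ext; simp]

lemma smul_mem_sepCone {X : Matrix (A × B) (A × B) ℂ} (hX : X ∈ sepCone A B) {c : ℝ}
    (hc : 0 ≤ c) : c • X ∈ sepCone A B := by
  induction hX using AddSubmonoid.closure_induction with
  | mem X hX =>
    obtain ⟨P, Q, hP, hQ, rfl⟩ := hX
    rw [← smul_kronecker]
    exact kronecker_mem_sepCone (posSemidef_real_smul hP hc) hQ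
  | zero => simp
  | add X Y _ _ hX hY => rw [smul_add]; exact add_mem hX hY

open scoped MatrixOrder Matrix.Norms.L2Operator in
lemma exists_add_smul_one_posSemidef {n : Type*} [Fintype n] [DecidableEq n]
    {X : Matrix n n ℂ} (hX : X.IsHermitian) : ∃ c : ℝ, 0 ≤ c ∧ (X + c • 1).PosSemidef := by
  refine ⟨‖X‖, norm_nonneg _, ?_⟩
  have h : IsSelfAdjoint X := hX
  have h1 := h.neg_algebraMap_norm_le_self
  rw [Matrix.le_iff] at h1
  simpa [Algebra.algebraMap_eq_smul_one] using h1

section Interior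

variable [DecidableEq A] [DecidableEq B]

/-- `X` becomes separable after adding a large enough multiple of the identity. -/
def ShiftSep (X : Matrix (A × B) (A × B) ℂ) : Prop :=
  ∃ c : ℝ, 0 ≤ c ∧ X + c • 1 ∈ sepCone A B

lemma ShiftSep.add {X Y : Matrix (A × B) (A × B) ℂ} (hX : ShiftSep X) (hY : ShiftSep Y) :
    ShiftSep (X + Y) := by
  obtain ⟨c, hc, hX⟩ := hX
  obtain ⟨d, hd, hY⟩ := hY
  refine ⟨c + d, add_nonneg hc hd, ?_⟩
  have := add_mem hX hY
  rwa [add_add_add_comm, ← add_smul] at this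

lemma ShiftSep.smul {X : Matrix (A × B) (A × B) ℂ} (hX : ShiftSep X) {t : ℝ} (ht : 0 ≤ t) :
    ShiftSep (t • X) := by
  obtain ⟨c, hc, hX⟩ := hX
  refine ⟨t * c, mul_nonneg ht hc, ?_⟩
  have := smul_mem_sepCone hX ht
  rwa [smul_add, smul_smul] at this

lemma ShiftSep.of_mem {X : Matrix (A × B) (A × B) ℂ} (hX : X ∈ sepCone A B) : ShiftSep X :=
  ⟨0, le_rfl, by simpa⟩

lemma ShiftSep.sum {ι : Type*} (s : Finset ι) (f : ι → Matrix (A × B) (A × B) ℂ)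
    (h : ∀ i ∈ s, ShiftSep (f i)) : ShiftSep (∑ i ∈ s, f i) := by
  classical
  induction s using Finset.induction_on with
  | empty => exact .of_mem (by simp)
  | insert i s hi ih =>
    rw [Finset.sum_insert hi]
    exact (h i (by simp)).add (ih fun j hj => h j (by simp [hj]))

/-- If `P ≤ p` and `Q ≤ q`, then `p q - P ⊗ Q = (p - P) ⊗ q + P ⊗ (q - Q)` is separable. -/
lemma shiftSep_neg_kronecker {P : Matrix A A ℂ} {Q : Matrix B B ℂ} (hP : P.PosSemidef)
    (hQ : Q.PosSemidef) : ShiftSep (-(P ⊗ₖ Q)) := by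
  obtain ⟨p, hp, hP'⟩ := exists_add_smul_one_posSemidef hP.1.neg
  obtain ⟨q, hq, hQ'⟩ := exists_add_smul_one_posSemidef hQ.1.neg
  refine ⟨p * q, mul_nonneg hp hq, ?_⟩
  have h := add_mem
    (kronecker_mem_sepCone hP' (posSemidef_real_smul (PosSemidef.one (n := B)) hq))
    (kronecker_mem_sepCone hP hQ')
  convert h using 1
  rw [← one_kronecker_one (α := ℂ) (m := A) (n := B)]
  ext ⟨a, b⟩ ⟨a', b'⟩
  simp only [Matrix.add_apply, Matrix.neg_apply, Matrix.smul_apply, kroneckerMap_apply,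
    Complex.real_smul]
  push_cast
  ring

/-- A Hermitian matrix is a positive semidefinite one minus a multiple of the identity, so a
product of two of them expands into positive and negative products of positive matrices. -/
lemma shiftSep_kronecker {X : Matrix A A ℂ} {Y : Matrix B B ℂ} (hX : X.IsHermitian)
    (hY : Y.IsHermitian) : ShiftSep (X ⊗ₖ Y) := by
  obtain ⟨p, hp, hX'⟩ := exists_add_smul_one_posSemidef hX
  obtain ⟨q, hq, hY'⟩ := exists_add_smul_one_posSemidef hY
  have h1A := posSemidef_real_smul (PosSemidef.one (n := A) (R := ℂ)) hp
  have h1B := posSemidef_real_smul (PosSemidef.one (n := B) (R := ℂ)) hq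
  have h := (((ShiftSep.of_mem (kronecker_mem_sepCone hX' hY')).add
    (ShiftSep.of_mem (kronecker_mem_sepCone h1A h1B))).add
    (shiftSep_neg_kronecker hX' h1B)).add (shiftSep_neg_kronecker h1A hY')
  convert h using 1
  ext ⟨a, b⟩ ⟨a', b'⟩
  simp [kroneckerMap_apply]
  ring

lemma isHermitian_add_conjTranspose {n : Type*} (Z : Matrix n n ℂ) : (Z + Zᴴ).IsHermitian := by
  simp [IsHermitian, add_comm]

lemma isHermitian_I_smul_sub {n : Type*} (Z : Matrix n n ℂ) :
    (Complex.I • (Z - Zᴴ)).IsHermitian := by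
  simp [IsHermitian, conjTranspose_smul, ← smul_neg]

/-- With `X = H₁ + i K₁` and `Y = H₂ + i K₂`, the matrix is `2 (H₁ ⊗ H₂ - K₁ ⊗ K₂)`. -/
lemma shiftSep_kronecker_add_conjTranspose (X : Matrix A A ℂ) (Y : Matrix B B ℂ) :
    ShiftSep (X ⊗ₖ Y + Xᴴ ⊗ₖ Yᴴ) := by
  have h := ((shiftSep_kronecker (isHermitian_add_conjTranspose X)
    (isHermitian_add_conjTranspose Y)).add (shiftSep_kronecker
      (isHermitian_I_smul_sub X).neg (isHermitian_I_smul_sub Y))).smul (t := 1 / 2) (by norm_num)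
  convert h using 1
  ext ⟨a, b⟩ ⟨a', b'⟩
  simp [kroneckerMap_apply]
  linear_combination
    (1 / 2) * (X a a' - (starRingEnd ℂ) (X a' a)) * (Y b b' - (starRingEnd ℂ) (Y b' b)) *
      Complex.I_sq

/-- The identity is interior to the separable cone, relative to the Hermitian matrices. -/
lemma exists_add_smul_one_mem_sepCone {X : Matrix (A × B) (A × B) ℂ} (hX : X.IsHermitian) :
    ∃ c : ℝ, 0 ≤ c ∧ X + c • 1 ∈ sepCone A B := by
  let E : (A × B) → (A × B) → Matrix (A × B) (A × B) ℂ := fun x y =>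
    single x.1 y.1 (X x y) ⊗ₖ single x.2 y.2 (1 : ℂ)
  have hE : X = ∑ x, ∑ y, E x y := by
    simp only [E, single_kronecker_single, mul_one]
    exact matrix_eq_sum_single X
  have h2 : X = (1 / 2 : ℝ) • ∑ x, ∑ y, (E x y + (E x y)ᴴ) := by
    have hE' : X = ∑ x, ∑ y, (E x y)ᴴ := by
      rw [← hX.eq]
      conv_lhs => rw [hE]
      simp only [conjTranspose_sum]
    simp only [Finset.sum_add_distrib]
    rw [← hE, ← hE', ← two_smul ℝ X, smul_smul]
    norm_num
  suffices ShiftSep X from this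
  rw [h2]
  refine ShiftSep.smul (.sum _ _ fun x _ => .sum _ _ fun y _ => ?_) (by norm_num)
  simp only [E, conjTranspose_kronecker]
  exact shiftSep_kronecker_add_conjTranspose _ _

end Interior

end SepCone

/-! ### States and cones -/

section States

variable {A B : Type*} [Fintype A] [Fintype B]

lemma trace_eq_ofReal {n : Type*} [Fintype n] {P : Matrix n n ℂ} (hP : P.PosSemidef) :
    ((P.trace.re : ℝ) : ℂ) = P.trace :=
  Complex.ext rfl (Complex.nonneg_iff.1 hP.trace_nonneg).2

/-- The reference state `ρ` is only needed for `P = 0`. -/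
lemma posSemidef_mem_cone {n : Type*} [Fintype n] {ρ : Matrix n n ℂ} (hρ : IsState ρ)
    {P : Matrix n n ℂ} (hP : P.PosSemidef) : P ∈ cone { σ | IsState σ } := by
  have hre := trace_eq_ofReal hP
  have h0 : 0 ≤ P.trace.re := (Complex.nonneg_iff.1 hP.trace_nonneg).1
  rcases h0.eq_or_lt with h | h
  · refine ⟨0, ρ, le_rfl, hρ, ?_⟩
    rw [zero_smul]
    exact hP.trace_eq_zero_iff.1 (by rw [← hre, ← h]; simp)
  · refine ⟨P.trace.re, (P.trace.re)⁻¹ • P, h0,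
      ⟨posSemidef_real_smul hP (inv_nonneg.2 h0), ?_⟩, ?_⟩
    · rw [trace_smul, ← hre]
      simp [h.ne']
    · rw [smul_inv_smul₀ h.ne']

lemma IsSepState.trace_eq {σ : Matrix (A × B) (A × B) ℂ} (h : IsSepState σ) : σ.trace = 1 := by
  obtain ⟨m, p, α, β, -, hp, hα, hβ, rfl⟩ := h
  simp only [trace_sum, trace_smul, trace_kronecker, (hα _).2, (hβ _).2, mul_one]
  rw [← Finset.sum_smul, hp, one_smul]

lemma isSepState_kronecker {α : Matrix A A ℂ} {β : Matrix B B ℂ} (hα : IsState α)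
    (hβ : IsState β) : IsSepState (α ⊗ₖ β) :=
  ⟨1, fun _ => 1, fun _ => α, fun _ => β, by simp, by simp, by simp [hα], by simp [hβ], by simp⟩

/-- A sum of products of positive matrices is a multiple of a separable state. The reference
states `α₀`, `β₀` are only needed for vanishing terms. -/
lemma sum_kronecker_mem_cone {α₀ : Matrix A A ℂ} {β₀ : Matrix B B ℂ} (hα₀ : IsState α₀)
    (hβ₀ : IsState β₀) {m : ℕ} {P : Fin m → Matrix A A ℂ} {Q : Fin m → Matrix B B ℂ}
    (hP : ∀ a, (P a).PosSemidef) (hQ : ∀ a, (Q a).PosSemidef) :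
    ∑ a, P a ⊗ₖ Q a ∈ cone { σ : Matrix (A × B) (A × B) ℂ | IsSepState σ } := by
  choose p α hp hα hPα using fun a => posSemidef_mem_cone hα₀ (hP a)
  choose q β hq hβ hQβ using fun a => posSemidef_mem_cone hβ₀ (hQ a)
  have hw : ∀ a ∈ Finset.univ, 0 ≤ p a * q a := fun a _ => mul_nonneg (hp a) (hq a)
  have hsum : ∑ a, P a ⊗ₖ Q a = ∑ a, (p a * q a) • (α a ⊗ₖ β a) := by
    refine Finset.sum_congr rfl fun a _ => ?_
    rw [hPα, hQβ, smul_kronecker, kronecker_smul, smul_smul]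
  rw [hsum]
  rcases (Finset.sum_nonneg hw).eq_or_lt with h | h
  · refine ⟨0, α₀ ⊗ₖ β₀, le_rfl, isSepState_kronecker hα₀ hβ₀, ?_⟩
    rw [zero_smul]
    refine Finset.sum_eq_zero fun a ha => ?_
    rw [(Finset.sum_eq_zero_iff_of_nonneg hw).1 h.symm a ha, zero_smul]
  · refine ⟨∑ a, p a * q a, ∑ a, ((∑ a, p a * q a)⁻¹ * (p a * q a)) • (α a ⊗ₖ β a), h.le,
      ⟨m, _, α, β, fun a => mul_nonneg (inv_nonneg.2 h.le) (hw a (Finset.mem_univ a)), ?_,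
        hα, hβ, rfl⟩, ?_⟩
    · rw [← Finset.mul_sum, inv_mul_cancel₀ h.ne']
    · simp only [mul_smul]
      rw [← Finset.smul_sum, smul_inv_smul₀ (ne_of_gt h)]

/-- Normalising `σ = (1 + r) τ - r η` gives `σ / s = (1 + r') τ₁ - r' η₁` with
`s = tr σ` and `r' = r * tr η / s`. -/
lemma trace_mul_robustness_le {n : Type*} [Fintype n] {F N : Set (Matrix n n ℂ)}
    (hF : ∀ σ ∈ F, σ.trace = 1) (hN : ∀ σ ∈ N, σ.trace = 1) {σ τ η : Matrix n n ℂ}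
    (hτ : τ ∈ cone F) (hη : η ∈ cone N) {r : ℝ} (hr : 0 ≤ r)
    (h : σ = (1 + r) • τ - r • η) :
    (if 0 < σ.trace.re then σ.trace.re * robustness F N ((σ.trace.re)⁻¹ • σ) else 0)
      ≤ r * η.trace.re := by
  obtain ⟨t, τ₁, ht, hτ₁, rfl⟩ := hτ
  obtain ⟨u, η₁, hu, hη₁, rfl⟩ := hη
  have hη_tr : (u • η₁).trace.re = u := by simp [trace_smul, hN _ hη₁]
  have hσ_tr : σ.trace.re = (1 + r) * t - r * u := by
    rw [h]; simp [trace_sub, trace_smul, hN _ hη₁, hF _ hτ₁]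
  rw [hη_tr]
  split_ifs with hs
  · rw [mul_comm, ← le_div_iff₀ hs]
    refine csInf_le ⟨0, fun x hx => hx.1⟩
      ⟨by positivity, τ₁, hτ₁, η₁, hη₁, ?_⟩
    have e : 1 + r * u / σ.trace.re = (σ.trace.re)⁻¹ * ((1 + r) * t) := by
      field_simp
      rw [hσ_tr]; ring
    have e' : r * u / σ.trace.re = (σ.trace.re)⁻¹ * (r * u) := by
      rw [div_eq_mul_inv, mul_comm]
    rw [e, e', mul_smul, mul_smul _ (r * u), ← smul_sub, mul_smul, mul_smul, ← h]
  · positivity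

end States

/-! ### Steering -/

section Steering

variable {A B C B' : Type*} [Fintype A] [Fintype B] [Fintype C] [Fintype B']
  [DecidableEq A] [DecidableEq B] [DecidableEq C] [DecidableEq B']

open scoped MatrixOrder Matrix.Norms.L2Operator in
lemma exists_conjTranspose_mul_self {n : Type*} [Fintype n] {ρ : Matrix n n ℂ}
    (hρ : ρ.PosSemidef) : ∃ W : Matrix n n ℂ, ρ = Wᴴ * W := by
  classical
  exact CStarAlgebra.nonneg_iff_eq_star_mul_self.mp hρ.nonneg

/-- Steering is completely positive after a transpose: factoring `ρ = Wᴴ W`, the rows of `W`,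
reshaped as matrices, are Kraus operators. -/
lemma exists_kraus_steerA {ρ : Matrix (A × B) (A × B) ℂ} (hρ : ρ.PosSemidef) :
    ∃ K : A × B → Matrix A B ℂ, ∀ X, steerA ρ X = ∑ k, K k * Xᵀ * (K k)ᴴ := by
  obtain ⟨W, rfl⟩ := exists_conjTranspose_mul_self hρ
  refine ⟨fun k => of fun a b => star (W k (a, b)), fun X => ?_⟩
  ext a a'
  have h : ∀ b, (Wᴴ * W * ((1 : Matrix A A ℂ) ⊗ₖ X)) (a, b) (a', b)
      = ∑ b', ∑ k, star (W k (a, b)) * X b' b * W k (a', b') := by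
    intro b
    rw [mul_apply, Fintype.sum_prod_type, Finset.sum_eq_single a'
      (fun x _ hx => by simp [kroneckerMap_apply, one_apply_ne hx]) (by simp)]
    refine Finset.sum_congr rfl fun b' _ => ?_
    simp only [kroneckerMap_apply, one_apply_eq, one_mul, mul_apply, conjTranspose_apply,
      Finset.sum_mul]
    exact Finset.sum_congr rfl fun k _ => by ring
  simp only [steerA, ptraceSnd, of_apply, h, Matrix.sum_apply]
  simp only [mul_apply, of_apply, transpose_apply, conjTranspose_apply, star_star, Finset.sum_mul]
  rw [Finset.sum_congr rfl fun b _ => Finset.sum_comm, Finset.sum_comm]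
  exact Finset.sum_congr rfl fun k _ => Finset.sum_comm

lemma exists_kraus_steerC {ρ : Matrix (B × C) (B × C) ℂ} (hρ : ρ.PosSemidef) :
    ∃ K : B × C → Matrix C B ℂ, ∀ X, steerC ρ X = ∑ k, K k * Xᵀ * (K k)ᴴ := by
  obtain ⟨W, rfl⟩ := exists_conjTranspose_mul_self hρ
  refine ⟨fun k => of fun c b => star (W k (b, c)), fun X => ?_⟩
  ext c c'
  have h : ∀ b, (Wᴴ * W * (X ⊗ₖ (1 : Matrix C C ℂ))) (b, c) (b, c')
      = ∑ b', ∑ k, star (W k (b, c)) * X b' b * W k (b', c') := by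
    intro b
    rw [mul_apply, Fintype.sum_prod_type]
    refine Finset.sum_congr rfl fun b' _ => ?_
    rw [Finset.sum_eq_single c'
      (fun x _ hx => by simp [kroneckerMap_apply, one_apply_ne hx]) (by simp)]
    simp only [kroneckerMap_apply, one_apply_eq, mul_one, mul_apply, conjTranspose_apply,
      Finset.sum_mul]
    exact Finset.sum_congr rfl fun k _ => by ring
  simp only [steerC, ptraceFst, of_apply, h, Matrix.sum_apply]
  simp only [mul_apply, of_apply, transpose_apply, conjTranspose_apply, star_star, Finset.sum_mul]
  rw [Finset.sum_congr rfl fun b _ => Finset.sum_comm, Finset.sum_comm]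
  exact Finset.sum_congr rfl fun k _ => Finset.sum_comm

lemma posSemidef_of_kraus {m n κ : Type*} [Fintype m] [Fintype n] [Fintype κ]
    (K : κ → Matrix n m ℂ) {X : Matrix m m ℂ} (hX : X.PosSemidef) :
    (∑ k, K k * Xᵀ * (K k)ᴴ).PosSemidef :=
  posSemidef_sum _ fun k _ => hX.transpose.mul_mul_conjTranspose_same (K k)

lemma steerA_posSemidef {ρ : Matrix (A × B) (A × B) ℂ} (hρ : ρ.PosSemidef)
    {X : Matrix B B ℂ} (hX : X.PosSemidef) : (steerA ρ X).PosSemidef := by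
  obtain ⟨K, hK⟩ := exists_kraus_steerA hρ
  rw [hK]
  exact posSemidef_of_kraus K hX

lemma steerC_posSemidef {ρ : Matrix (B × C) (B × C) ℂ} (hρ : ρ.PosSemidef)
    {X : Matrix B B ℂ} (hX : X.PosSemidef) : (steerC ρ X).PosSemidef := by
  obtain ⟨K, hK⟩ := exists_kraus_steerC hρ
  rw [hK]
  exact posSemidef_of_kraus K hX

lemma isState_steerA_one {ρ : Matrix (A × B) (A × B) ℂ} (hρ : IsState ρ) :
    IsState (steerA ρ 1) := by
  refine ⟨steerA_posSemidef hρ.1 .one, ?_⟩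
  rw [← hρ.2]
  simp [steerA, ptraceSnd, trace, Fintype.sum_prod_type]

lemma isState_steerC_one {ρ : Matrix (B × C) (B × C) ℂ} (hρ : IsState ρ) :
    IsState (steerC ρ 1) := by
  refine ⟨steerC_posSemidef hρ.1 .one, ?_⟩
  rw [← hρ.2]
  simp only [steerC, ptraceFst, trace, Fintype.sum_prod_type, one_kronecker_one, mul_one,
    diag_apply, of_apply]
  exact Finset.sum_comm

/-- The product of two steering maps is positive: the products of the Kraus operators of the
factors are Kraus operators for `S`, since both sides agree on matrix units. -/
lemma steer_posSemidef {ω0 : Matrix (A × B) (A × B) ℂ} (hω0 : ω0.PosSemidef)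
    {ξ0 : Matrix (B' × C) (B' × C) ℂ} (hξ0 : ξ0.PosSemidef)
    (S : Matrix (B × B') (B × B') ℂ →ₗ[ℂ] Matrix (A × C) (A × C) ℂ)
    (hS : ∀ (X : Matrix B B ℂ) (Y : Matrix B' B' ℂ),
      S (X ⊗ₖ Y) = steerA ω0 X ⊗ₖ steerC ξ0 Y)
    {X : Matrix (B × B') (B × B') ℂ} (hX : X.PosSemidef) : (S X).PosSemidef := by
  obtain ⟨K, hK⟩ := exists_kraus_steerA hω0
  obtain ⟨L, hL⟩ := exists_kraus_steerC hξ0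
  have key : ∀ X, S X = ∑ k : (A × B) × (B' × C),
      (K k.1 ⊗ₖ L k.2) * Xᵀ * (K k.1 ⊗ₖ L k.2)ᴴ := by
    intro X
    induction X using Matrix.induction_on' with
    | h_zero => simp
    | h_add X Y hX hY =>
      rw [map_add, hX, hY, ← Finset.sum_add_distrib]
      simp only [transpose_add, Matrix.mul_add, Matrix.add_mul]
    | h_std_basis x y z =>
      have e : single x y z = single x.1 y.1 z ⊗ₖ single x.2 y.2 (1 : ℂ) := by
        rw [single_kronecker_single, mul_one]
      rw [e, hS, hK, hL]
      have hsum : ∀ (f : A × B → Matrix A A ℂ) (g : B' × C → Matrix C C ℂ),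
          (∑ k, f k) ⊗ₖ (∑ l, g l) = ∑ k, ∑ l, f k ⊗ₖ g l := by
        intro f g
        ext ⟨a, c⟩ ⟨a', c'⟩
        simp [Matrix.sum_apply, kroneckerMap_apply, Finset.sum_mul_sum]
      rw [hsum, Fintype.sum_prod_type (α₁ := A × B)]
      simp only [conjTranspose_kronecker, ← kroneckerMap_transpose, ← mul_kronecker_mul]
  rw [key]
  exact posSemidef_of_kraus _ hX

lemma steer_sep_mem_cone {ω0 : Matrix (A × B) (A × B) ℂ} (hω0 : IsState ω0)
    {ξ0 : Matrix (B' × C) (B' × C) ℂ} (hξ0 : IsState ξ0)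
    (S : Matrix (B × B') (B × B') ℂ →ₗ[ℂ] Matrix (A × C) (A × C) ℂ)
    (hS : ∀ (X : Matrix B B ℂ) (Y : Matrix B' B' ℂ),
      S (X ⊗ₖ Y) = steerA ω0 X ⊗ₖ steerC ξ0 Y)
    {m : ℕ} {P : Fin m → Matrix B B ℂ} {Q : Fin m → Matrix B' B' ℂ}
    (hP : ∀ a, (P a).PosSemidef) (hQ : ∀ a, (Q a).PosSemidef) :
    S (∑ a, P a ⊗ₖ Q a) ∈ cone { σ : Matrix (A × C) (A × C) ℂ | IsSepState σ } := by
  simp only [map_sum, hS]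
  exact sum_kronecker_mem_cone (isState_steerA_one hω0) (isState_steerC_one hξ0)
    (fun a => steerA_posSemidef hω0.1 (hP a)) (fun a => steerC_posSemidef hξ0.1 (hQ a))

end Steering

/-! ### Feasibility of the POVM robustness -/

lemma exists_povm_decomposition {B B' ι : Type*} [Fintype B] [Fintype B'] [Fintype ι]
    [DecidableEq B] [DecidableEq B'] [Nonempty ι] {M : ι → Matrix (B × B') (B × B') ℂ}
    (hM : IsPOVM M) :
    ∃ r : ℝ, 0 ≤ r ∧ ∃ P, IsSepPOVM P ∧ ∃ N, IsSepPOVM N ∧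
      ∀ i, M i = (1 + r) • P i - r • N i := by
  choose c hc hcM using fun i => exists_add_smul_one_mem_sepCone (hM.1 i).1
  have hone : (1 : Matrix (B × B') (B × B') ℂ) ∈ sepCone B B' := by
    rw [← one_kronecker_one]
    exact kronecker_mem_sepCone .one .one
  have hcard : (Fintype.card ι : ℝ) ≠ 0 := by exact_mod_cast Fintype.card_ne_zero
  set s : ℝ := ∑ i, c i with hs
  have hs0 : 0 ≤ s := Finset.sum_nonneg fun i _ => hc i
  have hsM : ∀ i, M i + s • 1 ∈ sepCone B B' := by
    intro i
    have hle : c i ≤ s := Finset.single_le_sum (fun j _ => hc j) (Finset.mem_univ i)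
    have := add_mem (hcM i) (smul_mem_sepCone hone (sub_nonneg.2 hle))
    rwa [add_assoc, ← add_smul, add_sub_cancel] at this
  have hr0 : 0 ≤ s * Fintype.card ι := by positivity
  have hr1 : 1 + s * Fintype.card ι ≠ 0 := by positivity
  have hP : ∀ i, (1 + s * Fintype.card ι)⁻¹ • (M i + s • 1) ∈ sepCone B B' := fun i =>
    smul_mem_sepCone (hsM i) (by positivity)
  have hN : (Fintype.card ι : ℝ)⁻¹ • (1 : Matrix (B × B') (B × B') ℂ) ∈ sepCone B B' :=
    smul_mem_sepCone hone (by positivity)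
  refine ⟨s * Fintype.card ι, hr0, fun i => (1 + s * Fintype.card ι)⁻¹ • (M i + s • 1),
    ⟨⟨fun i => posSemidef_of_mem_sepCone (hP i), ?_⟩, fun i => exists_sum_of_mem_sepCone (hP i)⟩,
    fun _ => (Fintype.card ι : ℝ)⁻¹ • 1,
    ⟨⟨fun i => posSemidef_of_mem_sepCone hN, ?_⟩, fun i => exists_sum_of_mem_sepCone hN⟩, ?_⟩
  · rw [← Finset.smul_sum, Finset.sum_add_distrib, hM.2, Finset.sum_const, Finset.card_univ,
      ← Nat.cast_smul_eq_nsmul ℝ, smul_smul, mul_comm _ s]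
    nth_rw 1 [← one_smul ℝ (1 : Matrix (B × B') (B × B') ℂ)]
    rw [← add_smul, inv_smul_smul₀ hr1]
  · rw [Finset.sum_const, Finset.card_univ, ← Nat.cast_smul_eq_nsmul ℝ, smul_inv_smul₀ hcard]
  · intro i
    rw [smul_inv_smul₀ hr1, smul_smul, mul_assoc, mul_inv_cancel₀ hcard, mul_one,
      add_sub_cancel_right]

end Helpers

/-- (Robustness of an individual measurement in a line network.) The noise
sets are correspondingly either all POVMs together with all states, or the separable POVMs
together with the separable states. -/
theorem statement10 {A0 B B' C0 A' C' : Type*}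
    [Fintype A0] [Fintype B] [Fintype B'] [Fintype C0] [Fintype A'] [Fintype C']
    [DecidableEq A0] [DecidableEq B] [DecidableEq B'] [DecidableEq C0]
    {ιM ι κ : Type*} [Fintype ιM] [Fintype ι] [Fintype κ]
    (M : ιM → Matrix (B × B') (B × B') ℂ) (hM : IsPOVM M)
    (NoisePOVM : Set (ιM → Matrix (B × B') (B × B') ℂ))
    (Nmid : Set (Matrix (A0 × C0) (A0 × C0) ℂ))
    (Nend : Set (Matrix (A' × C') (A' × C') ℂ))
    (hchoice :
      (NoisePOVM = { P | IsPOVM P } ∧ Nmid = { σ | IsState σ } ∧ Nend = { σ | IsState σ }) ∨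
      (NoisePOVM = { P | IsSepPOVM P } ∧ Nmid = { σ | IsSepState σ } ∧
        Nend = { σ | IsSepState σ }))
    (ω0 : Matrix (A0 × B) (A0 × B) ℂ) (hω0 : IsState ω0)
    (ξ0 : Matrix (B' × C0) (B' × C0) ℂ) (hξ0 : IsState ξ0)
    (S : Matrix (B × B') (B × B') ℂ →ₗ[ℂ] Matrix (A0 × C0) (A0 × C0) ℂ)
    (hS : ∀ (X : Matrix B B ℂ) (Y : Matrix B' B' ℂ),
      S (X ⊗ₖ Y) = steerA ω0 X ⊗ₖ steerC ξ0 Y)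
    (Amap : ι → (Matrix A0 A0 ℂ →ₗ[ℂ] Matrix A' A' ℂ))
    (Atil : κ → (Matrix C0 C0 ℂ →ₗ[ℂ] Matrix C' C' ℂ))
    (hACP : ∀ b, IsCPMap (Amap b)) (hAtilCP : ∀ c, IsCPMap (Atil c))
    (T : ι → κ → (Matrix (A0 × C0) (A0 × C0) ℂ →ₗ[ℂ] Matrix (A' × C') (A' × C') ℂ))
    (hT : ∀ b c (X : Matrix A0 A0 ℂ) (Y : Matrix C0 C0 ℂ),
      T b c (X ⊗ₖ Y) = Amap b X ⊗ₖ Atil c Y)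
    (hTsep : ∀ b c,
      T b c '' cone { σ : Matrix (A0 × C0) (A0 × C0) ℂ | IsSepState σ } ⊆
        cone { σ : Matrix (A' × C') (A' × C') ℂ | IsSepState σ })
    (hTN : ∀ b c, T b c '' cone Nmid ⊆ cone Nend)
    (htr : ∀ X : Matrix (A0 × C0) (A0 × C0) ℂ, ∑ b, ∑ c, (T b c X).trace = X.trace) :
    ∑ i, ∑ b, ∑ c,
      (if 0 < (T b c (S (M i))).trace.re then
        (T b c (S (M i))).trace.re *
          robustness { σ : Matrix (A' × C') (A' × C') ℂ | IsSepState σ } Nend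
            ((((T b c (S (M i))).trace.re)⁻¹ : ℝ) • T b c (S (M i)))
      else 0)
      ≤ povmRobustness { P | IsSepPOVM P } NoisePOVM M := by
  have hρ := isSepState_kronecker (isState_steerA_one hω0) (isState_steerC_one hξ0)
  have hρ' : IsState (steerA ω0 1 ⊗ₖ steerC ξ0 1) :=
    ⟨(isState_steerA_one hω0).1.kronecker (isState_steerC_one hξ0).1, hρ.trace_eq⟩
  have hNend : ∀ σ ∈ Nend, σ.trace = 1 := by
    rcases hchoice with ⟨-, -, rfl⟩ | ⟨-, -, rfl⟩
    · exact fun σ hσ => hσ.2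
    · exact fun σ hσ => hσ.trace_eq
  have hNsum : ∀ N ∈ NoisePOVM, ∑ i, N i = 1 := by
    rcases hchoice with ⟨rfl, -, -⟩ | ⟨rfl, -, -⟩
    · exact fun N hN => hN.2
    · exact fun N hN => hN.1.2
  have hNmid : ∀ N ∈ NoisePOVM, ∀ i, S (N i) ∈ cone Nmid := by
    rcases hchoice with ⟨rfl, rfl, -⟩ | ⟨rfl, rfl, -⟩
    · exact fun N hN i => posSemidef_mem_cone hρ' (steer_posSemidef hω0.1 hξ0.1 S hS (hN.1 i))
    · intro N hN i
      obtain ⟨m, P, Q, hP, hQ, h⟩ := hN.2 i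
      rw [h]
      exact steer_sep_mem_cone hω0 hξ0 S hS hP hQ
  have hsepNoise : ∀ N, IsSepPOVM N → N ∈ NoisePOVM := by
    rcases hchoice with ⟨rfl, -, -⟩ | ⟨rfl, -, -⟩
    · exact fun N hN => hN.1
    · exact fun N hN => hN
  -- An empty family would give `1 = 0` as matrices, contradicting `tr (S 1) = 1`.
  have hne : Nonempty ιM := by
    by_contra hempty
    rw [not_nonempty_iff] at hempty
    have h01 : (1 : Matrix (B × B') (B × B') ℂ) = 0 := by
      rw [← hM.2, Finset.univ_eq_empty, Finset.sum_empty]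
    have h1 := hρ'.2
    rw [← hS, Matrix.one_kronecker_one, h01] at h1
    simp at h1
  refine le_csInf ?_ ?_
  · obtain ⟨r, hr, P, hP, N, hN, h⟩ := exists_povm_decomposition hM
    exact ⟨r, hr, P, hP, N, hsepNoise N hN, h⟩
  · rintro r ⟨hr, P, hP, N, hN, h⟩
    have hterm : ∀ i b c,
        (if 0 < (T b c (S (M i))).trace.re then
          (T b c (S (M i))).trace.re *
            robustness { σ : Matrix (A' × C') (A' × C') ℂ | IsSepState σ } Nend
              ((((T b c (S (M i))).trace.re)⁻¹ : ℝ) • T b c (S (M i)))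
        else 0) ≤ r * (T b c (S (N i))).trace.re := by
      intro i b c
      refine trace_mul_robustness_le (τ := T b c (S (P i))) (fun σ hσ => hσ.trace_eq) hNend
        (hTsep b c ⟨_, ?_, rfl⟩) (hTN b c ⟨_, hNmid N hN i, rfl⟩) hr ?_
      · obtain ⟨m, P', Q', hP', hQ', hPi⟩ := hP.2 i
        rw [hPi]
        exact steer_sep_mem_cone hω0 hξ0 S hS hP' hQ'
      · rw [h i]
        simp only [map_sub, LinearMap.map_smul_of_tower]
    refine (Finset.sum_le_sum fun i _ => Finset.sum_le_sum fun b _ =>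
      Finset.sum_le_sum fun c _ => hterm i b c).trans_eq ?_
    have htot : ∑ i, ∑ b, ∑ c, (T b c (S (N i))).trace = 1 := by
      simp only [htr]
      rw [← Matrix.trace_sum, ← map_sum, hNsum N hN, ← Matrix.one_kronecker_one, hS, hρ'.2]
    have htot' := congrArg Complex.re htot
    simp only [Complex.re_sum, Complex.one_re] at htot'
    simp only [← Finset.mul_sum, htot', mul_one]
end
end

section
/- (Schmidt number certification of a measurement in a line network.) Let M = {M_i} be a POVM on H_B ⊗ H_{B'} with Schmidt number SN(M), defined as the supremum, over finite-dimensional H_A, H_C, outcomes i, and states ρ on H_A ⊗ H_B ⊗ H_{B'} ⊗ H_C separable across the cut AB : B'C with tr((1_{AC} ⊗ M_i)ρ) > 0, of the Schmidt number of the normalized state (1/N) tr_{BB'}((1_{AC} ⊗ M_i)ρ). Let ω0 be a state on H_{A_0} ⊗ H_B and ξ0 a state on H_{B'} ⊗ H_{C_0}, set π_i = (S*_{ω0} ⊗ S*_{ξ0})(M_i) with S*_{ω0}(X) = tr_B(ω0(1 ⊗ X)) and S*_{ξ0}(Y) = tr_{B'}(ξ0(Y ⊗ 1)), and let Φ, Ψ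 be completely positive maps acting locally on the two factors, σ_i = (Φ ⊗ Ψ)(π_i). Then for every outcome i with tr σ_i > 0, SN(σ_i / tr σ_i) ≤ SN(M). -/
/-!
The endpoint operator is itself a measurement output: since `Φ` and `Ψ` act on the ends only,
`(Φ ⊗ Ψ)(π_i) = tr_{BB'}((1 ⊗ M_i) (ω ⊗ ξ))` with `ω = (Φ ⊗ id)(ω0)` and `ξ = (id ⊗ Ψ)(ξ0)`
(`map_steer_eq_midOut`, checked on matrix units). Both `ω` and `ξ` are positive semidefinite by the
Kraus form, and nonzero because the trace `c` is positive. After normalization `ω ⊗ ξ` is a product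
state, hence an admissible input in the supremum defining the Schmidt number of the POVM
(`schmidtNumber_midOut_le_povm`); the ancillas are relabelled by `Fin`, which does not change the
Schmidt number.

A supremum in `ℕ` dominates its members only if the set is bounded, so a bound uniform in
the ancillas is also needed. Writing every positive semidefinite operator as a sum of rank-one
projectors, the output is a sum of projectors onto vectors whose coefficient matrix factors through
the space indexed by `B`, so the Schmidt number never exceeds `dim B` (`schmidtNumber_midOut_le`).
-/

open scoped Kronecker ComplexOrder

noncomputable section

/-- The rank-one projector `|ψ⟩⟨ψ|` associated with a vector `ψ`. -/
def outerProj {n : Type*} (ψ : n → ℂ) : Matrix n n ℂ :=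
  Matrix.vecMulVec ψ (star ψ)

/-- The Schmidt rank of a bipartite vector: the rank of its coefficient matrix. -/
def schmidtRank {A B : Type*} [Fintype A] [Fintype B] (ψ : A × B → ℂ) : ℕ :=
  (Matrix.of fun a b => ψ (a, b)).rank

/-- The Schmidt number of a bipartite state: the minimum over pure-state decompositions
of the maximal Schmidt rank of the members. -/
def SchmidtNumber {A B : Type*} [Fintype A] [Fintype B]
    (ρ : Matrix (A × B) (A × B) ℂ) : ℕ :=
  sInf { k | ∃ (m : ℕ) (p : Fin m → ℝ) (ψ : Fin m → (A × B → ℂ)),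
    (∀ l, 0 < p l) ∧ (∑ l, p l = 1) ∧ (∀ l, ∑ v, Complex.normSq (ψ l v) = 1) ∧
    ρ = (∑ l, p l • outerProj (ψ l)) ∧
    k = Finset.univ.sup fun l => schmidtRank (ψ l) }

/-- Reordering `(A ⊗ B) ⊗ (B' ⊗ C) → (A ⊗ C) ⊗ (B ⊗ B')`. -/
def reorderMid {α B B' γ : Type*} : (α × B) × (B' × γ) → (α × γ) × (B × B') :=
  fun x => ((x.1.1, x.2.2), (x.1.2, x.2.1))

/-- The operator `(1_{AC} ⊗ M_i) ρ` on `(H_A ⊗ H_B) ⊗ (H_{B'} ⊗ H_C)`. -/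
def midMul {α B B' γ : Type*} [Fintype α] [Fintype B] [Fintype B'] [Fintype γ]
    [DecidableEq α] [DecidableEq γ]
    (Mi : Matrix (B × B') (B × B') ℂ) (ρ : Matrix ((α × B) × (B' × γ)) ((α × B) × (B' × γ)) ℂ) :
    Matrix ((α × B) × (B' × γ)) ((α × B) × (B' × γ)) ℂ :=
  (((1 : Matrix (α × γ) (α × γ) ℂ) ⊗ₖ Mi).submatrix reorderMid reorderMid) * ρ

/-- `tr_{BB'}((1_{AC} ⊗ M_i) ρ)`, an operator on `H_A ⊗ H_C`. -/
def midOut {α B B' γ : Type*} [Fintype α] [Fintype B] [Fintype B'] [Fintype γ]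
    [DecidableEq α] [DecidableEq γ]
    (Mi : Matrix (B × B') (B × B') ℂ) (ρ : Matrix ((α × B) × (B' × γ)) ((α × B) × (B' × γ)) ℂ) :
    Matrix (α × γ) (α × γ) ℂ :=
  Matrix.of fun s t => ∑ b, ∑ b', midMul Mi ρ ((s.1, b), (b', s.2)) ((t.1, b), (b', t.2))

/-- The Schmidt number of a bipartite POVM: the supremum, over all finite-dimensional
ancillas and all states separable across the cut `AB : B'C`, of the Schmidt number of the
induced normalized endpoint state. -/
def povmSchmidtNumber {B B' : Type*} [Fintype B] [Fintype B'] {ι : Type*}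
    (M : ι → Matrix (B × B') (B × B') ℂ) : ℕ :=
  sSup { k : ℕ | ∃ (dA dC : ℕ)
    (ρ : Matrix ((Fin dA × B) × (B' × Fin dC)) ((Fin dA × B) × (B' × Fin dC)) ℂ),
    IsSepState ρ ∧
    ∃ (i : ι) (c : ℝ), 0 < c ∧ (midMul (M i) ρ).trace = (c : ℂ) ∧
      k = SchmidtNumber ((c⁻¹ : ℝ) • midOut (M i) ρ) }

/-! ### The measurement output `tr_{BB'}((1 ⊗ X) ρ)` -/

lemma midOut_apply {α B B' γ : Type*} [Fintype α] [Fintype B] [Fintype B'] [Fintype γ]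
    [DecidableEq α] [DecidableEq γ] (X : Matrix (B × B') (B × B') ℂ)
    (ρ : Matrix ((α × B) × (B' × γ)) ((α × B) × (B' × γ)) ℂ) (s t : α × γ) :
    midOut X ρ s t = ∑ b, ∑ b', ∑ d, ∑ d',
      X (b, b') (d, d') * ρ ((s.1, d), (d', s.2)) ((t.1, b), (b', t.2)) := by
  simp only [midOut, midMul, Matrix.of_apply, Matrix.mul_apply, Matrix.submatrix_apply,
    reorderMid, Matrix.kroneckerMap_apply, Fintype.sum_prod_type, Matrix.one_apply, Prod.mk.injEq,
    ite_and, ite_mul, one_mul, zero_mul]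
  refine Finset.sum_congr rfl fun b _ => Finset.sum_congr rfl fun b' _ => ?_
  rw [Finset.sum_eq_single s.1 (fun a _ ha => by simp [ha.symm]) (by simp)]
  simp

lemma midOut_trace {α B B' γ : Type*} [Fintype α] [Fintype B] [Fintype B'] [Fintype γ]
    [DecidableEq α] [DecidableEq γ] (X : Matrix (B × B') (B × B') ℂ)
    (ρ : Matrix ((α × B) × (B' × γ)) ((α × B) × (B' × γ)) ℂ) :
    (midMul X ρ).trace = (midOut X ρ).trace := by
  simp only [Matrix.trace, Matrix.diag_apply, midOut, Matrix.of_apply, Fintype.sum_prod_type]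
  refine Finset.sum_congr rfl fun a _ => ?_
  conv_rhs => rw [Finset.sum_comm]
  refine Finset.sum_congr rfl fun b _ => ?_
  rw [Finset.sum_comm]

lemma midOut_sum_left {α B B' γ J : Type*} [Fintype α] [Fintype B] [Fintype B'] [Fintype γ]
    [DecidableEq α] [DecidableEq γ] (t : Finset J) (X : J → Matrix (B × B') (B × B') ℂ)
    (ρ : Matrix ((α × B) × (B' × γ)) ((α × B) × (B' × γ)) ℂ) :
    midOut (∑ j ∈ t, X j) ρ = ∑ j ∈ t, midOut (X j) ρ := by
  classical
  induction t using Finset.induction_on with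
  | empty => ext; simp [midOut_apply]
  | insert a t ha ih =>
    rw [Finset.sum_insert ha, Finset.sum_insert ha, ← ih]
    ext
    simp only [midOut_apply, Matrix.add_apply, add_mul, Finset.sum_add_distrib]

lemma midOut_sum_right {α B B' γ J : Type*} [Fintype α] [Fintype B] [Fintype B'] [Fintype γ]
    [DecidableEq α] [DecidableEq γ] (t : Finset J) (X : Matrix (B × B') (B × B') ℂ)
    (ρ : J → Matrix ((α × B) × (B' × γ)) ((α × B) × (B' × γ)) ℂ) :
    midOut X (∑ j ∈ t, ρ j) = ∑ j ∈ t, midOut X (ρ j) := by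
  classical
  induction t using Finset.induction_on with
  | empty => ext; simp [midOut_apply]
  | insert a t ha ih =>
    rw [Finset.sum_insert ha, Finset.sum_insert ha, ← ih]
    ext
    simp only [midOut_apply, Matrix.add_apply, mul_add, Finset.sum_add_distrib]

lemma midOut_smul_right {α B B' γ : Type*} [Fintype α] [Fintype B] [Fintype B'] [Fintype γ]
    [DecidableEq α] [DecidableEq γ] (r : ℝ) (X : Matrix (B × B') (B × B') ℂ)
    (ρ : Matrix ((α × B) × (B' × γ)) ((α × B) × (B' × γ)) ℂ) :
    midOut X (r • ρ) = r • midOut X ρ := by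
  ext
  simp only [midOut_apply, Matrix.smul_apply, Finset.smul_sum, mul_smul_comm]

lemma midOut_submatrix {α α' B B' γ γ' : Type*} [Fintype α] [Fintype B] [Fintype B'] [Fintype γ]
    [DecidableEq α] [DecidableEq γ] [Fintype α'] [Fintype γ'] [DecidableEq α'] [DecidableEq γ']
    (e : α' → α) (f : γ' → γ)
    (X : Matrix (B × B') (B × B') ℂ)
    (ω : Matrix (α × B) (α × B) ℂ) (ξ : Matrix (B' × γ) (B' × γ) ℂ) :
    midOut X (ω.submatrix (Prod.map e id) (Prod.map e id) ⊗ₖ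
        ξ.submatrix (Prod.map id f) (Prod.map id f)) =
      (midOut X (ω ⊗ₖ ξ)).submatrix (Prod.map e f) (Prod.map e f) := by
  ext
  simp [midOut_apply]

/-! ### Schmidt rank cones and the uniform bound `dim B` -/

open scoped MatrixOrder Matrix.Norms.L2Operator in
lemma posSemidef_eq_sum_outerProj {n : Type*} [Fintype n] {X : Matrix n n ℂ}
    (hX : X.PosSemidef) : ∃ v : n → n → ℂ, X = ∑ k, outerProj (v k) := by
  classical
  obtain ⟨Y, rfl⟩ := CStarAlgebra.nonneg_iff_eq_star_mul_self.mp hX.nonneg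
  refine ⟨fun k a => star (Y k a), ?_⟩
  ext a b
  simp [outerProj, Matrix.star_eq_conjTranspose, Matrix.mul_apply, Matrix.sum_apply,
    Matrix.vecMulVec_apply]

/-- The convex cone of operators that are finite sums of (unnormalized) rank-one projectors onto
vectors of Schmidt rank at most `k`, as an additive submonoid. -/
def schmidtCone (A B : Type*) [Fintype A] [Fintype B] (k : ℕ) :
    AddSubmonoid (Matrix (A × B) (A × B) ℂ) :=
  AddSubmonoid.closure {σ | ∃ φ : A × B → ℂ, schmidtRank φ ≤ k ∧ σ = outerProj φ}

lemma schmidtRank_smul_le {A B : Type*} [Fintype A] [Fintype B] (z : ℂ) (φ : A × B → ℂ) :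
    schmidtRank (z • φ) ≤ schmidtRank φ := by
  classical
  have : (Matrix.of fun a b => (z • φ) (a, b)) =
      (Matrix.of fun a b => φ (a, b)) * (z • (1 : Matrix B B ℂ)) := by
    ext; simp
  unfold schmidtRank
  rw [this]
  exact Matrix.rank_mul_le_left _ _

lemma trace_outerProj {n : Type*} [Fintype n] (ψ : n → ℂ) :
    (outerProj ψ).trace = ((∑ v, Complex.normSq (ψ v) : ℝ) : ℂ) := by
  simp [outerProj, Matrix.trace, Matrix.vecMulVec_apply, Complex.mul_conj]

/-- Normalizing each nonzero vector turns membership in the cone into a decomposition with positive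
weights and unit vectors; zero vectors are dropped. The weights need not sum to `1`. -/
lemma exists_decomp_of_mem_schmidtCone {A B : Type*} [Fintype A] [Fintype B] {k : ℕ}
    {σ : Matrix (A × B) (A × B) ℂ} (h : σ ∈ schmidtCone A B k) :
    ∃ (m : ℕ) (p : Fin m → ℝ) (ψ : Fin m → (A × B → ℂ)),
      (∀ l, 0 < p l) ∧ (∀ l, ∑ v, Complex.normSq (ψ l v) = 1) ∧
      σ = (∑ l, p l • outerProj (ψ l)) ∧ ∀ l, schmidtRank (ψ l) ≤ k := by
  induction h using AddSubmonoid.closure_induction with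
  | mem x hx =>
    obtain ⟨φ, hφ, rfl⟩ := hx
    by_cases h0 : φ = 0
    · exact ⟨0, Fin.elim0, Fin.elim0, by simp, by simp, by ext; simp [h0, outerProj], by simp⟩
    · set N : ℝ := ∑ v, Complex.normSq (φ v) with hN
      have hNpos : 0 < N := by
        obtain ⟨v, hv⟩ := Function.ne_iff.mp h0
        exact Finset.sum_pos' (fun _ _ => Complex.normSq_nonneg _)
          ⟨v, Finset.mem_univ _, Complex.normSq_pos.mpr hv⟩
      have hsq : (Real.sqrt N)⁻¹ * (Real.sqrt N)⁻¹ = N⁻¹ := by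
        rw [← mul_inv, Real.mul_self_sqrt hNpos.le]
      refine ⟨1, fun _ => N, fun _ => (((Real.sqrt N)⁻¹ : ℝ) : ℂ) • φ, fun _ => hNpos, ?_, ?_,
        fun _ => (schmidtRank_smul_le _ _).trans hφ⟩
      · intro _
        simp only [Pi.smul_apply, smul_eq_mul, Complex.normSq_mul, Complex.normSq_ofReal, hsq]
        rw [← Finset.mul_sum, ← hN, inv_mul_cancel₀ hNpos.ne']
      · ext a b
        have h1 : (N : ℂ) * ((((Real.sqrt N)⁻¹ : ℝ) : ℂ) * (((Real.sqrt N)⁻¹ : ℝ) : ℂ)) = 1 := by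
          rw [← Complex.ofReal_mul, hsq, ← Complex.ofReal_mul, mul_inv_cancel₀ hNpos.ne',
            Complex.ofReal_one]
        simp only [outerProj, Matrix.vecMulVec_apply, Finset.univ_unique, Finset.sum_const,
          Finset.card_singleton, one_smul, Matrix.smul_apply, Pi.smul_apply, Pi.star_apply,
          smul_eq_mul, star_mul', Complex.real_smul, RCLike.star_def, Complex.conj_ofReal]
        linear_combination (-(φ a * (starRingEnd ℂ) (φ b))) * h1
  | zero => exact ⟨0, Fin.elim0, Fin.elim0, by simp, by simp, by simp, by simp⟩
  | add x y _ _ hx hy =>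
    obtain ⟨m, p, ψ, h1, h2, h3, h4⟩ := hx
    obtain ⟨m', p', ψ', h1', h2', h3', h4'⟩ := hy
    refine ⟨m + m', Fin.append p p', Fin.append ψ ψ', ?_, ?_, ?_, ?_⟩
    · intro l; induction l using Fin.addCases <;> simp [*]
    · intro l; induction l using Fin.addCases <;> simp [*]
    · simp [Fin.sum_univ_add, h3, h3']
    · intro l; induction l using Fin.addCases <;> simp [*]

lemma schmidtNumber_le_of_mem_cone {A B : Type*} [Fintype A] [Fintype B] {k : ℕ}
    {σ : Matrix (A × B) (A × B) ℂ} (h : σ ∈ schmidtCone A B k) (htr : σ.trace = 1) :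
    SchmidtNumber σ ≤ k := by
  obtain ⟨m, p, ψ, h1, h2, h3, h4⟩ := exists_decomp_of_mem_schmidtCone h
  refine le_trans (Nat.sInf_le ⟨m, p, ψ, h1, ?_, h2, h3, rfl⟩) (Finset.sup_le fun l _ => h4 l)
  rw [h3, Matrix.trace_sum] at htr
  simp only [Matrix.trace_smul, trace_outerProj, h2] at htr
  exact_mod_cast (by simpa using htr : ((∑ l, (p l : ℂ)) = 1))

/-- On rank-one inputs the output vector has coefficient matrix `P * conj μ * R`, where `P`, `μ`
and `R` are the coefficient matrices of the inputs, so its Schmidt rank is at most `dim B`. -/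
lemma midOut_outerProj {α B B' γ : Type*} [Fintype α] [Fintype B] [Fintype B'] [Fintype γ]
    [DecidableEq α] [DecidableEq γ] (μ : B × B' → ℂ) (a : α × B → ℂ) (b : B' × γ → ℂ) :
    midOut (outerProj μ) (outerProj a ⊗ₖ outerProj b) ∈
      schmidtCone α γ (Fintype.card B) := by
  let P : Matrix α B ℂ := Matrix.of fun x d => a (x, d)
  let Q : Matrix B B' ℂ := Matrix.of fun d d' => star (μ (d, d'))
  let R : Matrix B' γ ℂ := Matrix.of fun d' y => b (d', y)
  refine AddSubmonoid.subset_closure ⟨fun s => (P * (Q * R)) s.1 s.2, ?_, ?_⟩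
  · exact (Matrix.rank_mul_le_left P (Q * R)).trans (Matrix.rank_le_card_width P)
  · ext s t
    simp only [midOut_apply, outerProj, Matrix.vecMulVec_apply, Matrix.kroneckerMap_apply,
      Pi.star_apply, Matrix.mul_apply, P, Q, R, Matrix.of_apply, star_sum, star_mul', star_star,
      Finset.mul_sum, Finset.sum_mul]
    refine Finset.sum_congr rfl fun _ _ => Finset.sum_congr rfl fun _ _ =>
      Finset.sum_congr rfl fun _ _ => Finset.sum_congr rfl fun _ _ => ?_
    ring

lemma midOut_mem_cone {α B B' γ : Type*} [Fintype α] [Fintype B] [Fintype B'] [Fintype γ]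
    [DecidableEq α] [DecidableEq γ] {X : Matrix (B × B') (B × B') ℂ} (hX : X.PosSemidef)
    {ω : Matrix (α × B) (α × B) ℂ} (hω : ω.PosSemidef)
    {ξ : Matrix (B' × γ) (B' × γ) ℂ} (hξ : ξ.PosSemidef) :
    midOut X (ω ⊗ₖ ξ) ∈ schmidtCone α γ (Fintype.card B) := by
  obtain ⟨μ, rfl⟩ := posSemidef_eq_sum_outerProj hX
  obtain ⟨a, rfl⟩ := posSemidef_eq_sum_outerProj hω
  obtain ⟨b, rfl⟩ := posSemidef_eq_sum_outerProj hξ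
  have : ((∑ k, outerProj (a k)) ⊗ₖ (∑ k, outerProj (b k))) =
      ∑ k, ∑ l, outerProj (a k) ⊗ₖ outerProj (b l) := by
    ext
    simp only [Matrix.kroneckerMap_apply, Matrix.sum_apply, Finset.sum_mul_sum]
  rw [this, midOut_sum_left]
  refine sum_mem fun j _ => ?_
  rw [midOut_sum_right]
  refine sum_mem fun k _ => ?_
  rw [midOut_sum_right]
  exact sum_mem fun l _ => midOut_outerProj _ _ _

/-- A separable input yields Schmidt number at most `dim B`, whatever the ancillas: hence the
supremum defining the Schmidt number of a POVM is over a bounded set. -/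
lemma schmidtNumber_midOut_le {α B B' γ : Type*} [Fintype α] [Fintype B] [Fintype B']
    [Fintype γ] [DecidableEq α] [DecidableEq γ] {X : Matrix (B × B') (B × B') ℂ}
    (hX : X.PosSemidef) {ρ : Matrix ((α × B) × (B' × γ)) ((α × B) × (B' × γ)) ℂ}
    (hρ : IsSepState ρ) {c : ℝ} (hc : 0 < c) (htr : (midMul X ρ).trace = (c : ℂ)) :
    SchmidtNumber ((c⁻¹ : ℝ) • midOut X ρ) ≤ Fintype.card B := by
  obtain ⟨m, p, α', β, hp, -, hα, hβ, rfl⟩ := hρ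
  refine schmidtNumber_le_of_mem_cone ?_ ?_
  · rw [← midOut_smul_right, Finset.smul_sum, midOut_sum_right]
    refine sum_mem fun l _ => ?_
    rw [smul_smul, ← Matrix.smul_kronecker]
    exact midOut_mem_cone hX ((hα l).1.smul (mul_nonneg (inv_nonneg.mpr hc.le) (hp l))) (hβ l).1
  · rw [Matrix.trace_smul, ← midOut_trace, htr, Complex.real_smul, ← Complex.ofReal_mul,
      inv_mul_cancel₀ hc.ne', Complex.ofReal_one]

/-! ### Relabelling and normalization -/

lemma schmidtNumber_submatrix {A B A' B' : Type*} [Fintype A] [Fintype B] [Fintype A']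
    [Fintype B'] (e : A' ≃ A) (f : B' ≃ B) (ρ : Matrix (A × B) (A × B) ℂ) :
    SchmidtNumber (ρ.submatrix (Prod.map e f) (Prod.map e f)) = SchmidtNumber ρ := by
  have rk : ∀ ψ : A × B → ℂ, schmidtRank (ψ ∘ Prod.map e f) = schmidtRank ψ := fun ψ =>
    Matrix.rank_submatrix (Matrix.of fun a b => ψ (a, b)) e f
  unfold SchmidtNumber
  congr 1
  ext k
  constructor
  · rintro ⟨m, p, ψ, h1, h2, h3, h4, rfl⟩
    have hψ : ∀ l, ψ l = (ψ l ∘ Prod.map e.symm f.symm) ∘ Prod.map e f := fun l => by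
      ext ⟨x, y⟩; simp
    refine ⟨m, p, fun l => ψ l ∘ Prod.map e.symm f.symm, h1, h2, fun l => ?_, ?_, ?_⟩
    · rw [← h3 l]
      exact (e.symm.prodCongr f.symm).sum_comp fun v => Complex.normSq (ψ l v)
    · ext ⟨x, y⟩ ⟨x', y'⟩
      have := congrFun (congrFun h4 (e.symm x, f.symm y)) (e.symm x', f.symm y')
      simpa [Matrix.sum_apply, outerProj, Matrix.vecMulVec_apply] using this
    · congr 1
      ext l
      conv_lhs => rw [hψ l]
      exact rk _
  · rintro ⟨m, p, ψ, h1, h2, h3, h4, rfl⟩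
    refine ⟨m, p, fun l => ψ l ∘ Prod.map e f, h1, h2, fun l => ?_, ?_, ?_⟩
    · rw [← h3 l]
      exact (e.prodCongr f).sum_comp fun v => Complex.normSq (ψ l v)
    · ext ⟨x, y⟩ ⟨x', y'⟩
      simp [h4, Matrix.sum_apply, outerProj, Matrix.vecMulVec_apply]
    · simp only [rk]

lemma exists_isState_smul {n : Type*} [Fintype n] {X : Matrix n n ℂ} (hX : X.PosSemidef)
    (h0 : X ≠ 0) : ∃ t : ℝ, 0 < t ∧ IsState (t⁻¹ • X) := by
  obtain ⟨h1, h2⟩ := Complex.nonneg_iff.mp hX.trace_nonneg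
  have htr : X.trace = (X.trace.re : ℂ) := Complex.ext rfl h2.symm
  have hpos : 0 < X.trace.re := by
    refine lt_of_le_of_ne h1 fun h => h0 (hX.trace_eq_zero_iff.mp ?_)
    rw [htr, ← h, Complex.ofReal_zero]
  refine ⟨X.trace.re, hpos, hX.smul (inv_nonneg.mpr h1), ?_⟩
  rw [Matrix.trace_smul, Complex.real_smul]
  conv_lhs => rw [htr]
  rw [Complex.ofReal_re, ← Complex.ofReal_mul, inv_mul_cancel₀ hpos.ne', Complex.ofReal_one]

lemma isState_submatrix {m n : Type*} [Fintype m] [Fintype n] (e : m ≃ n) {X : Matrix n n ℂ}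
    (hX : IsState X) : IsState (X.submatrix e e) :=
  ⟨hX.1.submatrix e, (e.sum_comp fun a => X a a).trans hX.2⟩

lemma isSepState_kronecker_s14 {A B : Type*} [Fintype A] [Fintype B] {ω : Matrix A A ℂ}
    {ξ : Matrix B B ℂ} (hω : IsState ω) (hξ : IsState ξ) : IsSepState (ω ⊗ₖ ξ) :=
  ⟨1, fun _ => 1, fun _ => ω, fun _ => ξ, by simp, by simp, fun _ => hω, fun _ => hξ, by simp⟩

/-- Normalizing the two factors and relabelling the ancillas by `Fin` exhibits the normalized
output as one of the competitors in the definition of `povmSchmidtNumber`. -/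
lemma schmidtNumber_midOut_le_povm {α B B' γ ι : Type*} [Fintype α] [Fintype B] [Fintype B']
    [Fintype γ] [DecidableEq α] [DecidableEq γ] {M : ι → Matrix (B × B') (B × B') ℂ}
    (hM : ∀ i, (M i).PosSemidef) {ω : Matrix (α × B) (α × B) ℂ} (hω : ω.PosSemidef)
    {ξ : Matrix (B' × γ) (B' × γ) ℂ} (hξ : ξ.PosSemidef) (i : ι) {c : ℝ} (hc : 0 < c)
    (htr : (midOut (M i) (ω ⊗ₖ ξ)).trace = (c : ℂ)) :
    SchmidtNumber ((c⁻¹ : ℝ) • midOut (M i) (ω ⊗ₖ ξ)) ≤ povmSchmidtNumber M := by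
  have h0 : midOut (M i) (ω ⊗ₖ ξ) ≠ 0 := by
    intro h
    rw [h, Matrix.trace_zero] at htr
    exact hc.ne (by exact_mod_cast htr)
  have hω0 : ω ≠ 0 := by
    rintro rfl
    exact h0 (by ext; simp [midOut_apply])
  have hξ0 : ξ ≠ 0 := by
    rintro rfl
    exact h0 (by ext; simp [midOut_apply])
  obtain ⟨t, ht, hωs⟩ := exists_isState_smul hω hω0
  obtain ⟨u, hu, hξs⟩ := exists_isState_smul hξ hξ0
  let e := (Fintype.equivFin α).symm
  let f := (Fintype.equivFin γ).symm
  have hωF : IsState ((t⁻¹ • ω).submatrix (Prod.map e id) (Prod.map e id)) :=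
    isState_submatrix (e.prodCongr (Equiv.refl B)) hωs
  have hξF : IsState ((u⁻¹ • ξ).submatrix (Prod.map id f) (Prod.map id f)) :=
    isState_submatrix ((Equiv.refl B').prodCongr f) hξs
  have hout : midOut (M i) ((t⁻¹ • ω).submatrix (Prod.map e id) (Prod.map e id) ⊗ₖ
        (u⁻¹ • ξ).submatrix (Prod.map id f) (Prod.map id f)) =
      ((t * u)⁻¹ • midOut (M i) (ω ⊗ₖ ξ)).submatrix (Prod.map e f) (Prod.map e f) := by
    rw [midOut_submatrix, Matrix.smul_kronecker, Matrix.kronecker_smul, smul_smul,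
      midOut_smul_right, mul_inv]
  have htu : 0 < t * u := mul_pos ht hu
  have hc' : 0 < (t * u)⁻¹ * c := mul_pos (inv_pos.mpr htu) hc
  unfold povmSchmidtNumber
  refine le_csSup ⟨Fintype.card B, ?_⟩ ⟨Fintype.card α, Fintype.card γ, _,
    isSepState_kronecker_s14 hωF hξF, i, (t * u)⁻¹ * c, hc', ?_, ?_⟩
  · rintro _ ⟨dA, dC, ρ, hρ, j, c', hc', htr', rfl⟩
    exact schmidtNumber_midOut_le (hM j) hρ hc' htr'
  · rw [midOut_trace, hout]
    refine ((e.prodCongr f).sum_comp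
      fun s => ((t * u)⁻¹ • midOut (M i) (ω ⊗ₖ ξ)) s s).trans ?_
    change ((t * u)⁻¹ • midOut (M i) (ω ⊗ₖ ξ)).trace = _
    rw [Matrix.trace_smul, htr, Complex.real_smul, Complex.ofReal_mul]
  · have hcc : ((t * u)⁻¹ * c)⁻¹ * (t * u)⁻¹ = c⁻¹ := by field_simp
    have hsm : ((t * u)⁻¹ * c)⁻¹ •
          ((t * u)⁻¹ • midOut (M i) (ω ⊗ₖ ξ)).submatrix (Prod.map e f) (Prod.map e f) =
        (c⁻¹ • midOut (M i) (ω ⊗ₖ ξ)).submatrix (Prod.map e f) (Prod.map e f) := by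
      rw [← hcc, ← smul_smul]
      rfl
    rw [hout, hsm, schmidtNumber_submatrix]

/-! ### Absorbing the local maps into the sources -/

/-- The operator `(Φ ⊗ id_B)(ω)`, obtained by applying `Φ` to each block of `ω`. -/
def ampA {A A' B : Type*} (Φ : Matrix A A ℂ →ₗ[ℂ] Matrix A' A' ℂ)
    (ω : Matrix (A × B) (A × B) ℂ) : Matrix (A' × B) (A' × B) ℂ :=
  Matrix.of fun s t => Φ (Matrix.of fun a a' => ω (a, s.2) (a', t.2)) s.1 t.1

/-- The operator `(id_B ⊗ Ψ)(ξ)`, obtained by applying `Ψ` to each block of `ξ`. -/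
def ampC {B C C' : Type*} (Ψ : Matrix C C ℂ →ₗ[ℂ] Matrix C' C' ℂ)
    (ξ : Matrix (B × C) (B × C) ℂ) : Matrix (B × C') (B × C') ℂ :=
  Matrix.of fun s t => Ψ (Matrix.of fun a a' => ξ (s.1, a) (t.1, a')) s.2 t.2

lemma ampA_posSemidef {A A' B : Type*} [Fintype A] [Fintype A'] [Fintype B]
    {Φ : Matrix A A ℂ →ₗ[ℂ] Matrix A' A' ℂ} (hΦ : IsCPMap Φ)
    {ω : Matrix (A × B) (A × B) ℂ} (hω : ω.PosSemidef) : (ampA Φ ω).PosSemidef := by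
  classical
  obtain ⟨r, K, hK⟩ := hΦ
  have : ampA Φ ω =
      ∑ k, (K k ⊗ₖ (1 : Matrix B B ℂ)) * ω * (K k ⊗ₖ (1 : Matrix B B ℂ)).conjTranspose := by
    ext ⟨x, b⟩ ⟨x', b'⟩
    simp [ampA, hK, Matrix.sum_apply, Matrix.mul_apply, Fintype.sum_prod_type, Matrix.one_apply,
      apply_ite]
  rw [this]
  exact Matrix.posSemidef_sum _ fun k _ => hω.mul_mul_conjTranspose_same _

lemma ampC_posSemidef {B C C' : Type*} [Fintype B] [Fintype C] [Fintype C']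
    {Ψ : Matrix C C ℂ →ₗ[ℂ] Matrix C' C' ℂ} (hΨ : IsCPMap Ψ)
    {ξ : Matrix (B × C) (B × C) ℂ} (hξ : ξ.PosSemidef) : (ampC Ψ ξ).PosSemidef := by
  classical
  obtain ⟨r, K, hK⟩ := hΨ
  have : ampC Ψ ξ =
      ∑ k, ((1 : Matrix B B ℂ) ⊗ₖ K k) * ξ * ((1 : Matrix B B ℂ) ⊗ₖ K k).conjTranspose := by
    ext ⟨b, x⟩ ⟨b', x'⟩
    simp [ampC, hK, Matrix.sum_apply, Matrix.mul_apply, Fintype.sum_prod_type_right,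
      Matrix.one_apply, apply_ite]
  rw [this]
  exact Matrix.posSemidef_sum _ fun k _ => hξ.mul_mul_conjTranspose_same _

lemma steerA_single {A B : Type*} [Fintype A] [Fintype B] [DecidableEq A] [DecidableEq B]
    (ω : Matrix (A × B) (A × B) ℂ) (b d : B) (x : ℂ) :
    steerA ω (Matrix.single b d x) = x • Matrix.of fun a a' => ω (a, d) (a', b) := by
  ext a a'
  simp [steerA, ptraceSnd, Matrix.mul_apply, Fintype.sum_prod_type, Matrix.one_apply,
    Matrix.single_apply, ite_and, mul_comm]

lemma steerC_single {B C : Type*} [Fintype B] [Fintype C] [DecidableEq B] [DecidableEq C]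
    (ξ : Matrix (B × C) (B × C) ℂ) (b d : B) (x : ℂ) :
    steerC ξ (Matrix.single b d x) = x • Matrix.of fun a a' => ξ (d, a) (b, a') := by
  ext a a'
  simp [steerC, ptraceFst, Matrix.mul_apply, Fintype.sum_prod_type_right, Matrix.one_apply,
    Matrix.single_apply, ite_and, mul_comm]

/-- Steering and then post-processing the endpoints is the same as measuring the product of the
two locally processed sources, since `Φ` and `Ψ` commute with the measurement on `BB'`. -/
lemma map_steer_eq_midOut {A0 B B' C0 A' C' : Type*}
    [Fintype A0] [Fintype B] [Fintype B'] [Fintype C0] [Fintype A'] [Fintype C']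
    [DecidableEq A0] [DecidableEq B] [DecidableEq B'] [DecidableEq C0]
    [DecidableEq A'] [DecidableEq C']
    {ω : Matrix (A0 × B) (A0 × B) ℂ} {ξ : Matrix (B' × C0) (B' × C0) ℂ}
    {S : Matrix (B × B') (B × B') ℂ →ₗ[ℂ] Matrix (A0 × C0) (A0 × C0) ℂ}
    (hS : ∀ (X : Matrix B B ℂ) (Y : Matrix B' B' ℂ),
      S (X ⊗ₖ Y) = steerA ω X ⊗ₖ steerC ξ Y)
    {Φ : Matrix A0 A0 ℂ →ₗ[ℂ] Matrix A' A' ℂ} {Ψ : Matrix C0 C0 ℂ →ₗ[ℂ] Matrix C' C' ℂ}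
    {T : Matrix (A0 × C0) (A0 × C0) ℂ →ₗ[ℂ] Matrix (A' × C') (A' × C') ℂ}
    (hT : ∀ (X : Matrix A0 A0 ℂ) (Y : Matrix C0 C0 ℂ), T (X ⊗ₖ Y) = Φ X ⊗ₖ Ψ Y)
    (X : Matrix (B × B') (B × B') ℂ) :
    T (S X) = midOut X (ampA Φ ω ⊗ₖ ampC Ψ ξ) := by
  induction X using Matrix.induction_on' with
  | h_zero => ext; simp [midOut_apply]
  | h_add p q hp hq =>
    rw [map_add, map_add, hp, hq]
    ext
    simp only [midOut_apply, Matrix.add_apply, add_mul, Finset.sum_add_distrib]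
  | h_std_basis i j x =>
    obtain ⟨b, b'⟩ := i
    obtain ⟨d, d'⟩ := j
    have hx : Matrix.single (b, b') (d, d') x =
        Matrix.single b d x ⊗ₖ Matrix.single b' d' (1 : ℂ) := by
      rw [Matrix.single_kronecker_single, mul_one]
    ext s t
    rw [midOut_apply, hx, hS, hT, steerA_single, steerC_single, map_smul, one_smul]
    simp [Matrix.single_apply, ite_and, ampA, ampC, mul_assoc]

/-- (Schmidt number certification of a measurement in a line network.)
The Schmidt number of every normalized endpoint state induced by the POVM in a line network
lower-bounds the Schmidt number of the POVM. -/
theorem statement14 {A0 B B' C0 A' C' : Type*}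
    [Fintype A0] [Fintype B] [Fintype B'] [Fintype C0] [Fintype A'] [Fintype C']
    [DecidableEq A0] [DecidableEq B] [DecidableEq B'] [DecidableEq C0]
    {ι : Type*} [Fintype ι]
    (M : ι → Matrix (B × B') (B × B') ℂ) (hM : IsPOVM M)
    (ω0 : Matrix (A0 × B) (A0 × B) ℂ) (hω0 : IsState ω0)
    (ξ0 : Matrix (B' × C0) (B' × C0) ℂ) (hξ0 : IsState ξ0)
    (S : Matrix (B × B') (B × B') ℂ →ₗ[ℂ] Matrix (A0 × C0) (A0 × C0) ℂ)
    (hS : ∀ (X : Matrix B B ℂ) (Y : Matrix B' B' ℂ),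
      S (X ⊗ₖ Y) = steerA ω0 X ⊗ₖ steerC ξ0 Y)
    (Φ : Matrix A0 A0 ℂ →ₗ[ℂ] Matrix A' A' ℂ) (Ψ : Matrix C0 C0 ℂ →ₗ[ℂ] Matrix C' C' ℂ)
    (hΦ : IsCPMap Φ) (hΨ : IsCPMap Ψ)
    (T : Matrix (A0 × C0) (A0 × C0) ℂ →ₗ[ℂ] Matrix (A' × C') (A' × C') ℂ)
    (hT : ∀ (X : Matrix A0 A0 ℂ) (Y : Matrix C0 C0 ℂ), T (X ⊗ₖ Y) = Φ X ⊗ₖ Ψ Y)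
    (i : ι) (c : ℝ) (hc : 0 < c) (htr : (T (S (M i))).trace = (c : ℂ)) :
    SchmidtNumber ((c⁻¹ : ℝ) • T (S (M i))) ≤ povmSchmidtNumber M := by
  classical
  rw [map_steer_eq_midOut hS hT] at htr ⊢
  exact schmidtNumber_midOut_le_povm hM.1 (ampA_posSemidef hΦ hω0.1) (ampC_posSemidef hΨ hξ0.1)
    i hc htr
end
end

section
/- (Activation computation for the lossy isotropic state.) Fix d ≥ 2 and p, q ∈ [0,1]. On ℂ^d ⊗ ℂ^{d+1}, where the second factor has basis |0⟩,…,|d−1⟩,|∅⟩ (with |∅⟩ = |d⟩), define ρ_{p,q} = qp |ψ+_d⟩⟨ψ+_d| + q(1−p) (1_d ⊗ 1_d)/d² + (1−q) (1_d/d) ⊗ |∅⟩⟨∅|, where |ψ+_d⟩ and 1_d on the second factor are embedded in the first d levels of ℂ^{d+1}. Let ρ1 = ρ_{p,q} on H_A ⊗ H_B (with H_A = ℂ^d, H_B = ℂ^{d+1}) and ρ2 the same state on H_{B'} ⊗ H_C with the lossy factor as H_{B'} = ℂ^{d+1} and H_C = ℂ^d (i.e., ρ2 is ρ_{p,q} with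 tensor factors swapped). Let B_1 = |ψ+_{d+1}'⟩⟨ψ+_{d+1}'| denote the projector onto the embedded d-dimensional maximally entangled vector (1/√d)Σ_{i=0}^{d−1}|ii⟩ on H_B ⊗ H_{B'}. Then tr_{BB'}((1_A ⊗ B_1 ⊗ 1_C)(ρ1 ⊗ ρ2)) = (q²/d²) ( p² |ψ+_d⟩⟨ψ+_d| + (1−p²) 1_{d²}/d² ) as an operator on ℂ^d ⊗ ℂ^d. -/
/-! The Bell vector on the middle systems lives on the first `d` levels, so the vacuum level `∅` never
contributes: the `(a,c),(a',c')` entry of the partial trace is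
`d⁻¹ ∑_{i,j<d} ρ((a,j),(a',i)) ρ((c,j),(c',i))` (`ptrace_bell`). On these levels `ρ` has entries
`(qp/d)[a=j][a'=i] + (q(1-p)/d²)[a=a'][j=i]` (`lossyIso_castSucc`). Expanding the product, the
`p²` term gives `|ψ+⟩⟨ψ+|`, and the two cross terms and the `(1-p)²` term are all multiples of
the identity, with total weight `2p(1-p) + (1-p)² = 1 - p²`. -/

open scoped Kronecker ComplexOrder

noncomputable section

/-- The maximally entangled unit vector `|ψ+_d⟩ = (1/√d) Σ_i |ii⟩` on `ℂ^d ⊗ ℂ^d`. -/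
def psiPlus (d : ℕ) : Fin d × Fin d → ℂ :=
  fun x => if x.1 = x.2 then (((Real.sqrt d : ℝ) : ℂ))⁻¹ else 0

/-- `|ψ+_d⟩` embedded in `ℂ^d ⊗ ℂ^{d+1}` (second factor in the first `d` levels). -/
def psiPlusEmb (d : ℕ) : Fin d × Fin (d + 1) → ℂ :=
  fun x => if (x.2 : ℕ) = (x.1 : ℕ) then (((Real.sqrt d : ℝ) : ℂ))⁻¹ else 0

/-- The identity `1_d` embedded in the first `d` levels of `ℂ^{d+1}`. -/
def idEmb (d : ℕ) : Matrix (Fin (d + 1)) (Fin (d + 1)) ℂ :=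
  Matrix.of fun j j' => if j = j' ∧ (j : ℕ) < d then 1 else 0

/-- The projector `|∅⟩⟨∅|` onto the vacuum level of `ℂ^{d+1}`. -/
def vacProj (d : ℕ) : Matrix (Fin (d + 1)) (Fin (d + 1)) ℂ :=
  Matrix.of fun j j' => if j = Fin.last d ∧ j' = Fin.last d then 1 else 0

/-- The lossy isotropic state
`ρ_{p,q} = qp|ψ+_d⟩⟨ψ+_d| + q(1−p)(1_d ⊗ 1_d)/d² + (1−q)(1_d/d) ⊗ |∅⟩⟨∅|` on `ℂ^d ⊗ ℂ^{d+1}`. -/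
def lossyIso (d : ℕ) (p q : ℝ) : Matrix (Fin d × Fin (d + 1)) (Fin d × Fin (d + 1)) ℂ :=
  (q * p) • outerProj (psiPlusEmb d) +
    (q * (1 - p) / (d : ℝ) ^ 2) • ((1 : Matrix (Fin d) (Fin d) ℂ) ⊗ₖ idEmb d) +
    ((1 - q) / (d : ℝ)) • ((1 : Matrix (Fin d) (Fin d) ℂ) ⊗ₖ vacProj d)

/-- The embedded maximally entangled vector `(1/√d) Σ_{i<d} |ii⟩` on `ℂ^{d+1} ⊗ ℂ^{d+1}`. -/
def bellEmb (d : ℕ) : Fin (d + 1) × Fin (d + 1) → ℂ :=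
  fun x => if x.1 = x.2 ∧ (x.1 : ℕ) < d then (((Real.sqrt d : ℝ) : ℂ))⁻¹ else 0

theorem inv_sqrt_mul_inv_sqrt (d : ℕ) :
    (((Real.sqrt d : ℝ) : ℂ))⁻¹ * (((Real.sqrt d : ℝ) : ℂ))⁻¹ = (d : ℂ)⁻¹ := by
  rw [← mul_inv, ← Complex.ofReal_mul, Real.mul_self_sqrt (Nat.cast_nonneg d)]
  simp

theorem star_inv_sqrt (d : ℕ) :
    star ((((Real.sqrt d : ℝ) : ℂ))⁻¹) = (((Real.sqrt d : ℝ) : ℂ))⁻¹ := by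
  rw [← Complex.ofReal_inv]
  exact Complex.conj_ofReal _

/-- Entries of the lossy isotropic state away from the vacuum level. -/
theorem lossyIso_castSucc (d : ℕ) (p q : ℝ) (a a' i j : Fin d) :
    lossyIso d p q (a, j.castSucc) (a', i.castSucc) =
      (q * p / d : ℂ) * ((if a = j then 1 else 0) * (if a' = i then 1 else 0)) +
      (q * (1 - p) / (d : ℂ) ^ 2) * ((if a = a' then 1 else 0) * (if j = i then 1 else 0)) := by
  have h1 : outerProj (psiPlusEmb d) (a, j.castSucc) (a', i.castSucc) =
      (d : ℂ)⁻¹ * ((if a = j then 1 else 0) * (if a' = i then 1 else 0)) := by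
    rw [← inv_sqrt_mul_inv_sqrt]
    simp only [outerProj, psiPlusEmb, Matrix.vecMulVec_apply, Pi.star_apply, Fin.val_castSucc,
      Fin.val_inj, eq_comm (a := j), eq_comm (a := i)]
    by_cases h : a = j <;> by_cases h' : a' = i <;> simp only [h, h', if_true, if_false,
      star_inv_sqrt, star_zero] <;> ring
  have h2 : idEmb d j.castSucc i.castSucc = if j = i then 1 else 0 := by
    simp [idEmb]
  have h3 : vacProj d j.castSucc i.castSucc = 0 := by
    simp [vacProj, (Fin.castSucc_lt_last j).ne]
  simp only [lossyIso, Matrix.add_apply, Matrix.smul_apply, Matrix.kroneckerMap_apply, h1, h2, h3,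
    Matrix.one_apply, Complex.real_smul]
  push_cast
  ring

theorem sum_bellEmb (d : ℕ) (f : Fin (d + 1) × Fin (d + 1) → ℂ) :
    ∑ x, bellEmb d x * f x =
      (((Real.sqrt d : ℝ) : ℂ))⁻¹ * ∑ i : Fin d, f (i.castSucc, i.castSucc) := by
  simp only [Fintype.sum_prod_type, Fin.sum_univ_castSucc, bellEmb]
  simp [Finset.mul_sum, (Fin.castSucc_lt_last _).ne, (Fin.castSucc_lt_last _).ne']

theorem star_bellEmb (d : ℕ) (x : Fin (d + 1) × Fin (d + 1)) :
    star (bellEmb d x) = bellEmb d x := by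
  unfold bellEmb
  split_ifs
  · exact star_inv_sqrt d
  · simp

/-- Tracing out `B` and `B'` against the embedded Bell projector contracts the two middle systems
along the first `d` levels. -/
theorem ptrace_bell (d : ℕ) (ρ : Matrix (Fin d × Fin (d + 1)) (Fin d × Fin (d + 1)) ℂ)
    (a c a' c' : Fin d) :
    ptraceSnd (bilocGlobal ρ (ρ.submatrix Prod.swap Prod.swap) (outerProj (bellEmb d)))
        (a, c) (a', c') =
      (d : ℂ)⁻¹ * ∑ i : Fin d, ∑ j : Fin d,
        ρ (a, j.castSucc) (a', i.castSucc) * ρ (c, j.castSucc) (c', i.castSucc) := by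
  have key : ∀ b : Fin (d + 1) × Fin (d + 1),
      bilocGlobal ρ (ρ.submatrix Prod.swap Prod.swap) (outerProj (bellEmb d))
        ((a, c), b) ((a', c'), b) =
      bellEmb d b * ∑ e, bellEmb d e * (ρ (a, e.1) (a', b.1) * ρ (c, e.2) (c', b.2)) := by
    intro b
    rw [bilocGlobal, Matrix.mul_apply, Fintype.sum_prod_type, Finset.sum_eq_single (a, c)]
    · rw [Finset.mul_sum]
      refine Finset.sum_congr rfl fun e _ => ?_
      simp only [Matrix.submatrix_apply, reorderMeas, reorderState, Matrix.kroneckerMap_apply,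
        Matrix.one_apply_eq, outerProj, Matrix.vecMulVec_apply, Pi.star_apply, star_bellEmb,
        Prod.swap_prod_mk]
      ring
    · rintro ⟨x, y⟩ - hxy
      refine Finset.sum_eq_zero fun e _ => ?_
      simp only [Matrix.submatrix_apply, reorderMeas, Matrix.kroneckerMap_apply, Matrix.one_apply]
      by_cases hx : a = x
      · have hy : c ≠ y := fun hy => hxy (by rw [hx, hy])
        simp [hy]
      · simp [hx]
    · simp
  simp only [ptraceSnd, Matrix.of_apply, key, sum_bellEmb]
  rw [← Finset.mul_sum, ← mul_assoc, inv_sqrt_mul_inv_sqrt]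

/-- Expansion of the contracted product: `x` and `y` are the weights of the maximally entangled
and the maximally mixed part. -/
theorem sum_expand (d : ℕ) (x y : ℂ) (a c a' c' : Fin d) :
    ∑ i : Fin d, ∑ j : Fin d,
      (x * ((if a = j then 1 else 0) * (if a' = i then 1 else 0)) +
        y * ((if a = a' then 1 else 0) * (if j = i then 1 else 0))) *
      (x * ((if c = j then 1 else 0) * (if c' = i then 1 else 0)) +
        y * ((if c = c' then 1 else 0) * (if j = i then 1 else 0))) =
      x ^ 2 * ((if a = c then 1 else 0) * (if a' = c' then 1 else 0)) +
      (2 * x * y + d * y ^ 2) * ((if a = a' then 1 else 0) * (if c = c' then 1 else 0)) := by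
  simp only [add_mul, mul_add, Finset.sum_add_distrib]
  have e1 : ∑ i : Fin d, ∑ j : Fin d,
      x * ((if a = j then 1 else 0) * (if a' = i then 1 else 0)) *
      (x * ((if c = j then 1 else 0) * (if c' = i then 1 else 0))) =
      x ^ 2 * ((if a = c then 1 else 0) * (if a' = c' then 1 else 0)) := by
    rw [Finset.sum_eq_single a' (fun i _ hi => by simp [hi.symm]) (by simp),
      Finset.sum_eq_single a (fun i _ hi => by simp [hi.symm]) (by simp)]
    simp only [if_true, eq_comm (a := c), eq_comm (a := c')]
    ring
  have e2 : ∑ i : Fin d, ∑ j : Fin d,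
      x * ((if a = j then 1 else 0) * (if a' = i then 1 else 0)) *
      (y * ((if c = c' then 1 else 0) * (if j = i then 1 else 0))) =
      x * y * ((if a = a' then 1 else 0) * (if c = c' then 1 else 0)) := by
    rw [Finset.sum_eq_single a' (fun i _ hi => by simp [hi.symm]) (by simp),
      Finset.sum_eq_single a (fun i _ hi => by simp [hi.symm]) (by simp)]
    simp only [if_true]
    ring
  have e3 : ∑ i : Fin d, ∑ j : Fin d,
      y * ((if a = a' then 1 else 0) * (if j = i then 1 else 0)) *
      (x * ((if c = j then 1 else 0) * (if c' = i then 1 else 0))) =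
      x * y * ((if a = a' then 1 else 0) * (if c = c' then 1 else 0)) := by
    rw [Finset.sum_eq_single c' (fun i _ hi => by simp [hi.symm]) (by simp),
      Finset.sum_eq_single c (fun i _ hi => by simp [hi.symm]) (by simp)]
    simp only [if_true]
    ring
  have e4 : ∑ i : Fin d, ∑ j : Fin d,
      y * ((if a = a' then 1 else 0) * (if j = i then 1 else 0)) *
      (y * ((if c = c' then 1 else 0) * (if j = i then 1 else 0))) =
      d * y ^ 2 * ((if a = a' then 1 else 0) * (if c = c' then 1 else 0)) := by
    have : ∀ i : Fin d, ∑ j : Fin d,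
        y * ((if a = a' then 1 else 0) * (if j = i then 1 else 0)) *
        (y * ((if c = c' then 1 else 0) * (if j = i then 1 else 0))) =
        y ^ 2 * ((if a = a' then 1 else 0) * (if c = c' then 1 else 0)) := by
      intro i
      rw [Finset.sum_eq_single i (fun j _ hj => by simp [hj]) (by simp)]
      simp only [if_true]
      ring
    simp only [this, Finset.sum_const, Finset.card_univ, Fintype.card_fin, nsmul_eq_mul]
    ring
  rw [e1, e2, e3, e4]
  ring

/-- Two copies of the lossy isotropic state in a bilocality network with
the embedded Bell projector yield the subnormalized endpoint state
`(q²/d²)(p²|ψ+_d⟩⟨ψ+_d| + (1−p²)1/d²)`. -/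
theorem statement16 (d : ℕ) (hd : 2 ≤ d) (p q : ℝ)
    (hp : p ∈ Set.Icc (0 : ℝ) 1) (hq : q ∈ Set.Icc (0 : ℝ) 1) :
    ptraceSnd (bilocGlobal (lossyIso d p q)
        ((lossyIso d p q).submatrix Prod.swap Prod.swap)
        (outerProj (bellEmb d))) =
      (q ^ 2 / (d : ℝ) ^ 2) •
        (p ^ 2 • outerProj (psiPlus d) +
          ((1 - p ^ 2) / (d : ℝ) ^ 2) • (1 : Matrix (Fin d × Fin d) (Fin d × Fin d) ℂ)) := by
  have hd0 : (d : ℂ) ≠ 0 := by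
    exact_mod_cast (by omega : d ≠ 0)
  ext ⟨a, c⟩ ⟨a', c'⟩
  rw [ptrace_bell]
  simp only [lossyIso_castSucc]
  rw [sum_expand]
  have h1 : outerProj (psiPlus d) (a, c) (a', c') =
      (d : ℂ)⁻¹ * ((if a = c then 1 else 0) * (if a' = c' then 1 else 0)) := by
    rw [← inv_sqrt_mul_inv_sqrt]
    simp only [outerProj, psiPlus, Matrix.vecMulVec_apply, Pi.star_apply]
    by_cases h : a = c <;> by_cases h' : a' = c' <;> simp only [h, h', if_true, if_false,
      star_inv_sqrt, star_zero] <;> ring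
  have h2 : (1 : Matrix (Fin d × Fin d) (Fin d × Fin d) ℂ) (a, c) (a', c') =
      (if a = a' then 1 else 0) * (if c = c' then 1 else 0) := by
    simp only [Matrix.one_apply, Prod.mk.injEq, ite_and, ite_mul, one_mul, zero_mul]
  simp only [Matrix.add_apply, Matrix.smul_apply, h1, h2, Complex.real_smul]
  push_cast
  field_simp
  ring
end
end
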